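/- arXiv:2307.07257 — 4 statements merged into one kernel-verified Lean document; each statement's English description precedes it below -/
import Mathlib

section
/- Let σ > 0, T > 0 and τ₀ ∈ [0,T). Let B : [0,T]×ℝ^d → ℝ^m be bounded, with each B(t,·) horizontally differentiable and sup over (t,x) of |div_G B(t,·)(x)| finite. Let N : ℝ^d → [0,∞) be such that N² ∈ C²(ℝ^d) and, for some constant C ≥ 0, |∇_G(N²)(x)|² ≤ C N(x)² and |Δ_G(N²)(x)| ≤ C for all x ∈ ℝ^d. Then for every β₁ > 0 there exist β̄ > 0 and τ ∈ (τ₀, T] such that the function Φ(t,x) := exp(−(β₁ + β̄(t−τ₀))(N(x)² + 1)) satisfies ∂_t Φ(t,x) + σ Δ_G Φ(t,·)(x) + B(t,x)·∇_G Φ(t,·)(x) + div_G B(t,·)(x) · Φ(t,x) ≤ 0 for all (t,x) ∈ (τ₀, τ) × ℝ^d. -/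
open MeasureTheory Set

noncomputable section

/-- Derivative of `f : ℝ^d → ℝ` along the vector field `X` (horizontal derivative `X f`). -/
def vderiv {d : ℕ} (X : (Fin d → ℝ) → (Fin d → ℝ)) (f : (Fin d → ℝ) → ℝ)
    (x : Fin d → ℝ) : ℝ := fderiv ℝ f x (X x)

/-- Squared Euclidean norm of the horizontal gradient `∇_G f`. -/
def hgradSq {d m : ℕ} (X : Fin m → (Fin d → ℝ) → (Fin d → ℝ)) (f : (Fin d → ℝ) → ℝ)
    (x : Fin d → ℝ) : ℝ := ∑ i, (vderiv (X i) f x) ^ 2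

/-- Horizontal Laplacian `Δ_G f = Σ X_i (X_i f)`. -/
def hLap {d m : ℕ} (X : Fin m → (Fin d → ℝ) → (Fin d → ℝ)) (f : (Fin d → ℝ) → ℝ)
    (x : Fin d → ℝ) : ℝ := ∑ i, vderiv (X i) (vderiv (X i) f) x

/-- Horizontal divergence `div_G B = Σ X_i B_i`. -/
def hdiv {d m : ℕ} (X : Fin m → (Fin d → ℝ) → (Fin d → ℝ)) (B : (Fin d → ℝ) → Fin m → ℝ)
    (x : Fin d → ℝ) : ℝ := ∑ i, vderiv (X i) (fun y => B y i) x

/-- Euclidean divergence `Σ_j ∂_{x_j} X^j` of a vector field on `ℝ^d`. -/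
def ediv {d : ℕ} (X : (Fin d → ℝ) → (Fin d → ℝ)) (x : Fin d → ℝ) : ℝ :=
  ∑ j, fderiv ℝ X x (Pi.single j 1) j

/-- Anisotropic dilations `δ_λ x = (λ^{w_1} x_1, …, λ^{w_d} x_d)`. -/
def dil {d : ℕ} (w : Fin d → ℕ) (l : ℝ) (x : Fin d → ℝ) : Fin d → ℝ :=
  fun i => l ^ (w i) * x i

/-- A vector field is `δ`-homogeneous of degree one. -/
def homogOne {d : ℕ} (w : Fin d → ℕ) (X : (Fin d → ℝ) → (Fin d → ℝ)) : Prop :=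
  ∀ l : ℝ, 0 < l → ∀ x, fderiv ℝ (dil w l) x (X x) = l • X (dil w l x)

lemma young_aux (a v M : ℝ) (h : a ^ 2 ≤ M ^ 2) : -(a * v) ≤ M ^ 2 / 2 + v ^ 2 / 2 := by
  nlinarith [sq_nonneg (a + v)]

lemma vderiv_expo {d : ℕ} (X : (Fin d → ℝ) → (Fin d → ℝ)) (g : (Fin d → ℝ) → ℝ)
    (hg : Differentiable ℝ g) (b : ℝ) (x : Fin d → ℝ) :
    vderiv X (fun y => Real.exp (-b * (g y + 1))) x
      = (-b) * (Real.exp (-b * (g x + 1)) * vderiv X g x) := by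
  have h := ((((hg x).hasFDerivAt).add_const 1).const_mul (-b)).exp
  unfold vderiv
  rw [h.fderiv]
  simp
  ring

lemma vderiv2_expo {d : ℕ} (X : (Fin d → ℝ) → (Fin d → ℝ)) (g : (Fin d → ℝ) → ℝ)
    (hX : ContDiff ℝ (⊤ : ℕ∞) X) (hg : ContDiff ℝ 2 g) (b : ℝ) (x : Fin d → ℝ) :
    vderiv X (vderiv X (fun y => Real.exp (-b * (g y + 1)))) x
      = Real.exp (-b * (g x + 1)) *
        (b ^ 2 * (vderiv X g x) ^ 2 - b * vderiv X (vderiv X g) x) := by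
  have hgd : Differentiable ℝ g := hg.differentiable (by norm_num)
  have hv : Differentiable ℝ (vderiv X g) := by
    have h1 : Differentiable ℝ (fderiv ℝ g) :=
      (hg.fderiv_right (m := 1) (by norm_num)).differentiable (by norm_num)
    have h2 : Differentiable ℝ X := hX.differentiable (by simp)
    exact h1.clm_apply h2
  have e : vderiv X (fun y => Real.exp (-b * (g y + 1)))
      = fun y => (-b) * (Real.exp (-b * (g y + 1)) * vderiv X g y) := by
    funext y
    exact vderiv_expo X g hgd b y
  rw [e]
  have h := ((((hgd x).hasFDerivAt).add_const 1).const_mul (-b)).exp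
  have h3 := (h.mul (hv x).hasFDerivAt).const_mul (-b)
  have h4 : vderiv X (fun y => (-b) * (Real.exp (-b * (g y + 1)) * vderiv X g y)) x = _ :=
    congrArg (fun L => L (X x)) h3.fderiv
  rw [h4]
  simp [vderiv]
  ring

set_option maxHeartbeats 1000000 in
/-- Construction of the exponential subsolution `Φ` used in the uniqueness
proof for the linear Fokker–Planck equation:  for every `β₁ > 0` there are `β̄ > 0` and
`τ ∈ (τ₀, T]` such that `Φ(t,x) = exp(−(β₁ + β̄(t−τ₀))(N(x)² + 1))` satisfies
`∂_t Φ + σ Δ_G Φ + B·∇_G Φ + (div_G B) Φ ≤ 0` on `(τ₀, τ) × ℝ^d`. -/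
theorem exponential_subsolution {d m : ℕ} (hd : 0 < d) (hm : 0 < m)
    (X : Fin m → (Fin d → ℝ) → (Fin d → ℝ)) (hXsm : ∀ i, ContDiff ℝ (⊤ : ℕ∞) (X i))
    (σ T τ₀ : ℝ) (hσ : 0 < σ) (hT : 0 < T) (hτ₀ : τ₀ ∈ Set.Ico 0 T)
    (B : ℝ → (Fin d → ℝ) → Fin m → ℝ)
    (MB : ℝ) (hBbd : ∀ t x i, |B t x i| ≤ MB)
    (hBdiff : ∀ t x i, DifferentiableAt ℝ (fun y => B t y i) x)
    (MdivB : ℝ) (hdivBbd : ∀ t x, |hdiv X (B t) x| ≤ MdivB)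
    (N : (Fin d → ℝ) → ℝ) (hN : ∀ x, 0 ≤ N x)
    (hNC2 : ContDiff ℝ 2 (fun x => N x ^ 2))
    (C : ℝ) (hC : 0 ≤ C)
    (hgrad : ∀ x, hgradSq X (fun y => N y ^ 2) x ≤ C * N x ^ 2)
    (hlap : ∀ x, |hLap X (fun y => N y ^ 2) x| ≤ C) :
    ∀ β₁ : ℝ, 0 < β₁ → ∃ β' : ℝ, 0 < β' ∧ ∃ τ ∈ Set.Ioc τ₀ T,
      ∀ t ∈ Set.Ioo τ₀ τ, ∀ x : Fin d → ℝ,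
        deriv (fun s : ℝ => Real.exp (-(β₁ + β' * (s - τ₀)) * (N x ^ 2 + 1))) t
          + σ * hLap X (fun y => Real.exp (-(β₁ + β' * (t - τ₀)) * (N y ^ 2 + 1))) x
          + (∑ i, B t x i *
              vderiv (X i) (fun y => Real.exp (-(β₁ + β' * (t - τ₀)) * (N y ^ 2 + 1))) x)
          + hdiv X (B t) x * Real.exp (-(β₁ + β' * (t - τ₀)) * (N x ^ 2 + 1)) ≤ 0 := by
  intro β₁ hβ₁
  have hMd : 0 ≤ MdivB := (abs_nonneg _).trans (hdivBbd 0 0)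
  set K : ℝ := σ * (4 * β₁ ^ 2 * C) + σ * (2 * β₁ * C) + β₁ * (m * MB ^ 2 + C) + MdivB with hK
  have hK0 : 0 ≤ K := by positivity
  have hK1 : 0 < K + 1 := by linarith
  refine ⟨K + 1, hK1, min T (τ₀ + β₁ / (K + 1)), ⟨lt_min hτ₀.2 ?_, min_le_left _ _⟩, ?_⟩
  · have : 0 < β₁ / (K + 1) := by positivity
    linarith
  intro t ht x
  have ht1 : 0 < t - τ₀ := by linarith [ht.1]
  have ht2 : t - τ₀ < β₁ / (K + 1) := by
    have := ht.2.trans_le (min_le_right _ _)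
    linarith
  have ht3 : (K + 1) * (t - τ₀) < β₁ := by
    rw [lt_div_iff₀ hK1] at ht2
    linarith
  have ht4 : 0 < (K + 1) * (t - τ₀) := by positivity
  have hderiv : deriv (fun s : ℝ => Real.exp (-(β₁ + (K + 1) * (s - τ₀)) * (N x ^ 2 + 1))) t
      = Real.exp (-(β₁ + (K + 1) * (t - τ₀)) * (N x ^ 2 + 1)) * (-(K + 1) * (N x ^ 2 + 1)) := by
    have h := ((((((hasDerivAt_id t).sub_const τ₀).const_mul (K + 1)).const_add β₁).neg).mul_const
      (N x ^ 2 + 1)).exp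
    have h2 := h.deriv
    simp only [id, mul_one] at h2
    exact h2
  rw [hderiv]
  set b : ℝ := β₁ + (K + 1) * (t - τ₀) with hb
  have hb0 : 0 < b := by linarith
  have hb2 : b ≤ 2 * β₁ := by linarith
  have hgd : Differentiable ℝ (fun x => N x ^ 2) := hNC2.differentiable (by norm_num)
  have hL : hLap X (fun y => Real.exp (-b * (N y ^ 2 + 1))) x
      = Real.exp (-b * (N x ^ 2 + 1)) *
        (b ^ 2 * hgradSq X (fun y => N y ^ 2) x - b * hLap X (fun y => N y ^ 2) x) := by
    unfold hLap hgradSq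
    rw [Finset.mul_sum, Finset.mul_sum, ← Finset.sum_sub_distrib, Finset.mul_sum]
    exact Finset.sum_congr rfl fun i _ => vderiv2_expo (X i) _ (hXsm i) hNC2 b x
  have hG : (∑ i, B t x i * vderiv (X i) (fun y => Real.exp (-b * (N y ^ 2 + 1))) x)
      = Real.exp (-b * (N x ^ 2 + 1)) *
        (b * ∑ i, -(B t x i * vderiv (X i) (fun y => N y ^ 2) x)) := by
    rw [Finset.mul_sum, Finset.mul_sum]
    refine Finset.sum_congr rfl fun i _ => ?_
    rw [vderiv_expo (X i) (fun y => N y ^ 2) hgd b x]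
    ring
  rw [hL, hG]
  have hS : (∑ i, -(B t x i * vderiv (X i) (fun y => N y ^ 2) x))
      ≤ (m * MB ^ 2 + C * N x ^ 2) / 2 := by
    have h1 : (∑ i, -(B t x i * vderiv (X i) (fun y => N y ^ 2) x))
        ≤ ∑ i, (MB ^ 2 / 2 + (vderiv (X i) (fun y => N y ^ 2) x) ^ 2 / 2) := by
      refine Finset.sum_le_sum fun i _ => ?_
      have h2 : (B t x i) ^ 2 ≤ MB ^ 2 := sq_le_sq.2 ((hBbd t x i).trans (le_abs_self _))
      exact young_aux _ _ _ h2
    have h3 := hgrad x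
    unfold hgradSq at h3
    rw [Finset.sum_add_distrib, Finset.sum_const, ← Finset.sum_div] at h1
    simp only [Finset.card_univ, Fintype.card_fin, nsmul_eq_mul] at h1
    linarith
  have hg0 : 0 ≤ hgradSq X (fun y => N y ^ 2) x := Finset.sum_nonneg fun i _ => sq_nonneg _
  have e1 : b ^ 2 * hgradSq X (fun y => N y ^ 2) x ≤ (2 * β₁) ^ 2 * (C * N x ^ 2) :=
    mul_le_mul (pow_le_pow_left₀ hb0.le hb2 2) (hgrad x) hg0 (by positivity)
  have e2 : -(b * hLap X (fun y => N y ^ 2) x) ≤ 2 * β₁ * C := by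
    have h1 : b * (-hLap X (fun y => N y ^ 2) x) ≤ b * C :=
      mul_le_mul_of_nonneg_left ((neg_le_abs _).trans (hlap x)) hb0.le
    have h2 : b * C ≤ 2 * β₁ * C := mul_le_mul_of_nonneg_right hb2 hC
    linarith
  have e3 : b * (∑ i, -(B t x i * vderiv (X i) (fun y => N y ^ 2) x))
      ≤ β₁ * (m * MB ^ 2 + C * N x ^ 2) := by
    have h1 := mul_le_mul_of_nonneg_left hS hb0.le
    have h2 : b * ((m * MB ^ 2 + C * N x ^ 2) / 2) ≤ 2 * β₁ * ((m * MB ^ 2 + C * N x ^ 2) / 2) :=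
      mul_le_mul_of_nonneg_right hb2 (by positivity)
    linarith
  have e4 : hdiv X (B t) x ≤ MdivB := (le_abs_self _).trans (hdivBbd t x)
  have e5 : σ * (b ^ 2 * hgradSq X (fun y => N y ^ 2) x - b * hLap X (fun y => N y ^ 2) x)
      ≤ σ * ((2 * β₁) ^ 2 * (C * N x ^ 2) + 2 * β₁ * C) :=
    mul_le_mul_of_nonneg_left (by linarith) hσ.le
  have key : -(K + 1) * (N x ^ 2 + 1)
      + σ * (b ^ 2 * hgradSq X (fun y => N y ^ 2) x - b * hLap X (fun y => N y ^ 2) x)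
      + b * (∑ i, -(B t x i * vderiv (X i) (fun y => N y ^ 2) x)) + hdiv X (B t) x ≤ 0 := by
    have n0 : 0 ≤ N x ^ 2 := sq_nonneg _
    have p1 : 0 ≤ σ * (4 * β₁ ^ 2 * C) := by positivity
    have p2 : 0 ≤ σ * (2 * β₁ * C) * N x ^ 2 := by positivity
    have p3 : 0 ≤ β₁ * (m * MB ^ 2) * N x ^ 2 := by positivity
    have p4 : 0 ≤ β₁ * C := by positivity
    have p5 : 0 ≤ MdivB * N x ^ 2 := by positivity
    have p6 : (K + 1) * (N x ^ 2 + 1) = (σ * (4 * β₁ ^ 2 * C) + σ * (2 * β₁ * C)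
      + β₁ * (m * MB ^ 2 + C) + MdivB + 1) * (N x ^ 2 + 1) := by rw [hK]
    linarith
  have := mul_nonpos_of_nonneg_of_nonpos (Real.exp_pos (-b * (N x ^ 2 + 1))).le key
  linarith
end
end

section
/- Let σ > 0 and T > 0. Assume: (a) each X_i is divergence-free and there are C₀ ≥ 0 and κ ∈ ℕ with |X_i(x)| + ‖DX_i(x)‖ ≤ C₀(1+|x|)^κ for all x ∈ ℝ^d and all i; (b) B : [0,T]×ℝ^d → ℝ^m is continuous and bounded, each B(t,·) is C¹, and div_G B is continuous and bounded on [0,T]×ℝ^d; (c) Q : [0,T]×ℝ^d → ℝ is continuous and bounded; (d) N : ℝ^d → [0,∞) is continuous, N² ∈ C²(ℝ^d), and there are constants C ≥ 0, c₀ > 0, ε₀ > 0 such that |∇_G(N²)(x)|² ≤ C N(x)² and |Δ_G(N²)(x)| ≤ C for all x, and N(x) ≥ c₀ |x|^{ε₀} whenever |x| ≥ 1. Let ρ₀ : ℝ^d → ℝ and let ρ₁, ρ₂ : [0,T]×ℝ^d → ℝ be continuous functions which on (0,T)×ℝ^d are C¹ in t and C² in x with all these derivatives continuous in (t,x), which satisfy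 ∂_t ρ_j − σ Δ_G ρ_j + B·∇_G ρ_j + Q ρ_j = 0 pointwise on (0,T)×ℝ^d and ρ_j(0,·) = ρ₀, and for which there exists β > 0 with ∫₀^T ∫_{ℝ^d} |ρ_j(t,x)| e^{−β(N(x)²+1)} dx dt < ∞ for j = 1,2. Then ρ₁ = ρ₂ on [0,T]×ℝ^d. -/
open MeasureTheory Set

noncomputable section

theorem vderiv_contDiff {d : ℕ} {X : (Fin d → ℝ) → (Fin d → ℝ)} (hX : ContDiff ℝ (⊤ : ℕ∞) X)
    {f : (Fin d → ℝ) → ℝ} (hf : ContDiff ℝ 2 f) : ContDiff ℝ 1 (vderiv X f) := by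
  unfold vderiv
  have h1 : ContDiff ℝ 1 (fderiv ℝ f) := hf.fderiv_right (by norm_num)
  exact h1.clm_apply (hX.of_le (by exact_mod_cast le_top))

theorem vderiv_continuous {d : ℕ} {X : (Fin d → ℝ) → (Fin d → ℝ)} (hX : Continuous X)
    {f : (Fin d → ℝ) → ℝ} (hf : ContDiff ℝ 1 f) : Continuous (vderiv X f) := by
  unfold vderiv
  have h1 : Continuous (fderiv ℝ f) := hf.continuous_fderiv (by norm_num)
  exact h1.clm_apply hX

theorem vderiv_comp {d : ℕ} (X : (Fin d → ℝ) → (Fin d → ℝ)) {f : (Fin d → ℝ) → ℝ}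
    {φ : ℝ → ℝ} {φ' : ℝ} {x : Fin d → ℝ} (hφ : HasDerivAt φ φ' (f x))
    (hf : DifferentiableAt ℝ f x) :
    vderiv X (fun y => φ (f y)) x = φ' * vderiv X f x := by
  unfold vderiv
  have := (hφ.comp_hasFDerivAt x hf.hasFDerivAt).fderiv
  simp only [Function.comp_def] at this
  rw [this]; simp

theorem vderiv_mul {d : ℕ} (X : (Fin d → ℝ) → (Fin d → ℝ)) {f g : (Fin d → ℝ) → ℝ}
    {x : Fin d → ℝ} (hf : DifferentiableAt ℝ f x) (hg : DifferentiableAt ℝ g x) :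
    vderiv X (fun y => f y * g y) x = f x * vderiv X g x + g x * vderiv X f x := by
  unfold vderiv
  have h : HasFDerivAt (fun y => f y * g y) _ x := hf.hasFDerivAt.mul hg.hasFDerivAt
  rw [h.fderiv]; simp

theorem vderiv_sub {d : ℕ} (X : (Fin d → ℝ) → (Fin d → ℝ)) {f g : (Fin d → ℝ) → ℝ}
    {x : Fin d → ℝ} (hf : DifferentiableAt ℝ f x) (hg : DifferentiableAt ℝ g x) :
    vderiv X (fun y => f y - g y) x = vderiv X f x - vderiv X g x := by
  unfold vderiv
  have h : HasFDerivAt (fun y => f y - g y) _ x := hf.hasFDerivAt.sub hg.hasFDerivAt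
  rw [h.fderiv]; simp

theorem vderiv_compactSupport {d : ℕ} (X : (Fin d → ℝ) → (Fin d → ℝ)) {f : (Fin d → ℝ) → ℝ}
    (hf : HasCompactSupport f) : HasCompactSupport (vderiv X f) := by
  have h := hf.fderiv (𝕜 := ℝ)
  refine h.mono ?_
  intro x hx
  contrapose! hx
  simp only [Function.mem_support, not_not] at hx
  simp [vderiv, hx]

theorem integral_vderiv_zero {d : ℕ} {X : (Fin d → ℝ) → (Fin d → ℝ)}
    (hX : ContDiff ℝ (⊤ : ℕ∞) X) (hdiv : ∀ x, ediv X x = 0) {f : (Fin d → ℝ) → ℝ}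
    (hf : ContDiff ℝ 1 f) (hc : HasCompactSupport f) : ∫ x, vderiv X f x = 0 := by
  have hX1 : ContDiff ℝ 1 X := hX.of_le (by exact_mod_cast le_top)
  have hXj : ∀ j, ContDiff ℝ 1 (fun x => X x j) := fun j => contDiff_pi.1 hX1 j
  have hfc : Continuous (fderiv ℝ f) := hf.continuous_fderiv (by norm_num)
  have hsupp := hc.fderiv (𝕜 := ℝ)
  have e1 : ∀ x, vderiv X f x = ∑ j, X x j * fderiv ℝ f x (Pi.single j 1) := by
    intro x
    unfold vderiv
    conv_lhs => rw [← Finset.univ_sum_single (X x)]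
    rw [map_sum]
    refine Finset.sum_congr rfl fun j _ => ?_
    have : (Pi.single j (X x j) : Fin d → ℝ) = X x j • Pi.single j 1 := by
      rw [← Pi.single_smul]; simp
    rw [this, map_smul, smul_eq_mul]
  have hd : ∀ j, HasCompactSupport (fun x => fderiv ℝ f x (Pi.single j 1)) := by
    intro j
    refine hsupp.mono ?_
    intro x hx
    contrapose! hx
    simp only [Function.mem_support, not_not] at hx
    simp [hx]
  have i1 : ∀ j, Integrable (fun x => X x j * fderiv ℝ f x (Pi.single j 1)) := fun j =>
    ((hXj j).continuous.mul (hfc.clm_apply continuous_const)).integrable_of_hasCompactSupport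
      (hd j).mul_left
  have hXd : ∀ j, Continuous (fun x => fderiv ℝ (fun x => X x j) x (Pi.single j 1)) := fun j =>
    ((hXj j).continuous_fderiv (by norm_num)).clm_apply continuous_const
  have i2 : ∀ j, Integrable (fun x => fderiv ℝ (fun x => X x j) x (Pi.single j 1) * f x) :=
    fun j => ((hXd j).mul hf.continuous).integrable_of_hasCompactSupport hc.mul_left
  have i3 : ∀ j, Integrable (fun x => X x j * f x) := fun j =>
    ((hXj j).continuous.mul hf.continuous).integrable_of_hasCompactSupport hc.mul_left
  simp_rw [e1]
  rw [integral_finsetSum _ fun j _ => i1 j]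
  have : ∀ j, ∫ x, X x j * fderiv ℝ f x (Pi.single j 1)
      = - ∫ x, fderiv ℝ (fun x => X x j) x (Pi.single j 1) * f x := fun j =>
    integral_mul_fderiv_eq_neg_fderiv_mul_of_integrable (i2 j) (i1 j) (i3 j)
      (fun x _ => (hXj j).differentiable (by norm_num) x)
      (fun x _ => hf.differentiable (by norm_num) x)
  simp_rw [this]
  rw [Finset.sum_neg_distrib, ← integral_finsetSum _ fun j _ => i2 j]
  have : ∀ x, ∑ j, fderiv ℝ (fun x => X x j) x (Pi.single j 1) * f x = 0 := by
    intro x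
    have h := hdiv x
    unfold ediv at h
    rw [← Finset.sum_mul]
    have e : ∀ j, fderiv ℝ (fun x => X x j) x (Pi.single j 1) = fderiv ℝ X x (Pi.single j 1) j := by
      intro j
      have h2 := (hasFDerivAt_pi'.1 (hX1.differentiable (by norm_num) x).hasFDerivAt j).fderiv
      rw [h2]; simp
    simp_rw [e, h, zero_mul]
  simp [this]

theorem vderiv_ibp {d : ℕ} {X : (Fin d → ℝ) → (Fin d → ℝ)}
    (hX : ContDiff ℝ (⊤ : ℕ∞) X) (hdiv : ∀ x, ediv X x = 0) {f g : (Fin d → ℝ) → ℝ}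
    (hf : ContDiff ℝ 1 f) (hg : ContDiff ℝ 1 g) (hc : HasCompactSupport g) :
    ∫ x, g x * vderiv X f x = - ∫ x, f x * vderiv X g x := by
  have h0 := integral_vderiv_zero hX hdiv (hf.mul hg) hc.mul_left
  have hXc := hX.continuous
  have i1 : Integrable (fun x => f x * vderiv X g x) :=
    (hf.continuous.mul (vderiv_continuous hXc hg)).integrable_of_hasCompactSupport
      (vderiv_compactSupport X hc).mul_left
  have i2 : Integrable (fun x => g x * vderiv X f x) :=
    (hg.continuous.mul (vderiv_continuous hXc hf)).integrable_of_hasCompactSupport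
      hc.mul_right
  have : ∀ x, vderiv X (fun y => f y * g y) x = f x * vderiv X g x + g x * vderiv X f x := fun x =>
    vderiv_mul X (hf.differentiable (by norm_num) x) (hg.differentiable (by norm_num) x)
  rw [integral_congr_ae (Filter.Eventually.of_forall this), integral_add i1 i2] at h0
  linarith

/-- second-order integration by parts -/
theorem vderiv_ibp2 {d : ℕ} {X : (Fin d → ℝ) → (Fin d → ℝ)}
    (hX : ContDiff ℝ (⊤ : ℕ∞) X) (hdiv : ∀ x, ediv X x = 0) {f g : (Fin d → ℝ) → ℝ}
    (hf : ContDiff ℝ 2 f) (hg : ContDiff ℝ 2 g) (hc : HasCompactSupport g) :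
    ∫ x, g x * vderiv X (vderiv X f) x = ∫ x, f x * vderiv X (vderiv X g) x := by
  have hf1 : ContDiff ℝ 1 f := hf.of_le (by norm_num)
  have hg1 : ContDiff ℝ 1 g := hg.of_le (by norm_num)
  rw [vderiv_ibp hX hdiv (vderiv_contDiff hX hf) hg1 hc]
  have := vderiv_ibp hX hdiv hf1 (vderiv_contDiff hX hg) (vderiv_compactSupport X hc)
  have e : ∫ x, vderiv X f x * vderiv X g x = ∫ x, vderiv X g x * vderiv X f x := by
    simp_rw [mul_comm]
  rw [e, this, neg_neg]

/-- the regularised absolute value -/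
theorem exists_eta : ∃ η η1 η2 : ℝ → ℝ, ContDiff ℝ 2 η ∧ ContDiff ℝ 1 η1 ∧
    (∀ v, HasDerivAt η (η1 v) v) ∧ (∀ v, HasDerivAt η1 (η2 v) v) ∧ (∀ v, 0 ≤ η2 v) ∧
    (∀ v, 0 ≤ η v) ∧ (∀ v, η v ≤ |v|) ∧ (∀ v, |v * η1 v| ≤ 2 * η v) ∧
    (∀ v, η v = 0 → v = 0) ∧ η 0 = 0 := by
  have hp : ∀ v : ℝ, 0 < 1 + v ^ 2 := fun v => by positivity
  have hs : ∀ v : ℝ, 1 ≤ √(1 + v ^ 2) := fun v => by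
    rw [Real.one_le_sqrt]; nlinarith [sq_nonneg v]
  have hsq : ∀ v : ℝ, √(1 + v ^ 2) ^ 2 = 1 + v ^ 2 := fun v => Real.sq_sqrt (hp v).le
  have hd : ∀ v : ℝ, HasDerivAt (fun v : ℝ => √(1 + v ^ 2)) (v / √(1 + v ^ 2)) v := fun v => by
    have h1 : HasDerivAt (fun v : ℝ => 1 + v ^ 2) (2 * v) v := by
      simpa using (hasDerivAt_pow 2 v).const_add 1
    convert h1.sqrt (hp v).ne' using 1
    have := hs v
    field_simp
  have hcs : ∀ n : ℕ, ContDiff ℝ n (fun v : ℝ => √(1 + v ^ 2)) := fun n =>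
    (contDiff_const.add (contDiff_id.pow 2)).sqrt fun v => (hp v).ne'
  refine ⟨fun v => √(1 + v ^ 2) - 1, fun v => v / √(1 + v ^ 2),
    fun v => (1 * √(1 + v ^ 2) - v * (v / √(1 + v ^ 2))) / √(1 + v ^ 2) ^ 2,
    ?_, ?_, ?_, ?_, ?_, ?_, ?_, ?_, ?_, ?_⟩
  · exact (hcs 2).sub contDiff_const
  · exact contDiff_id.div (hcs 1) fun v => by have := hs v; positivity
  · intro v; exact (hd v).sub_const 1
  · intro v
    exact (hasDerivAt_id v).div (hd v) (by have := hs v; positivity)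
  · intro v
    have h1 := hs v; have h2 := hsq v
    apply div_nonneg _ (by positivity)
    rw [sub_nonneg, ← mul_div_assoc, div_le_iff₀ (by positivity)]
    nlinarith
  · intro v; have := hs v; simp only; linarith
  · intro v
    have h1 := hs v; have h2 := hsq v
    have h3 := sq_abs v
    simp only
    nlinarith [abs_nonneg v]
  · intro v
    have h1 := hs v; have h2 := hsq v
    have e : v * (v / √(1 + v ^ 2)) = v ^ 2 / √(1 + v ^ 2) := by ring
    simp only [e]
    rw [abs_of_nonneg (by positivity), div_le_iff₀ (by positivity)]
    nlinarith
  · intro v h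
    have h2 := hsq v
    have : √(1 + v ^ 2) = 1 := by simp only at h; linarith
    rw [this] at h2
    have : v ^ 2 = 0 := by linarith
    exact pow_eq_zero_iff (two_ne_zero) |>.1 this
  · simp

theorem hasDerivAt_pospow (n : ℕ) (y : ℝ) :
    HasDerivAt (fun y : ℝ => max y 0 ^ (n + 2)) ((n + 2 : ℕ) * max y 0 ^ (n + 1)) y := by
  rcases lt_trichotomy y 0 with h | h | h
  · rw [max_eq_right h.le]
    have : (fun y : ℝ => max y 0 ^ (n + 2)) =ᶠ[nhds y] fun _ => 0 := by
      filter_upwards [Iio_mem_nhds h] with z hz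
      rw [max_eq_right (le_of_lt hz)]; simp
    simpa using (hasDerivAt_const y (0:ℝ)).congr_of_eventuallyEq this
  · subst h
    simp only [max_self, ne_eq, Nat.add_eq_zero_iff, one_ne_zero, and_false, not_false_eq_true,
      zero_pow, mul_zero]
    rw [hasDerivAt_iff_isLittleO_nhds_zero]
    have : (fun h : ℝ => max (0 + h) 0 ^ (n + 2) - max (0:ℝ) 0 ^ (n + 2) - h • (0:ℝ))
        =O[nhds 0] fun h => h ^ (n + 2) := by
      refine Asymptotics.IsBigO.of_bound 1 (Filter.Eventually.of_forall fun h => ?_)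
      simp only [zero_add, max_self, ne_eq, Nat.add_eq_zero_iff, OfNat.ofNat_ne_zero, and_false,
        not_false_eq_true, zero_pow, sub_zero, smul_zero, norm_pow, Real.norm_eq_abs, one_mul]
      refine pow_le_pow_left₀ (abs_nonneg _) ?_ _
      rw [abs_of_nonneg (le_max_right h 0)]
      exact max_le (le_abs_self _) (abs_nonneg _)
    refine this.trans_isLittleO ?_
    simpa using (Asymptotics.isLittleO_pow_pow (𝕜 := ℝ) (m := 1) (n := n + 2) (by omega))
  · rw [max_eq_left h.le]
    have : (fun y : ℝ => max y 0 ^ (n + 2)) =ᶠ[nhds y] fun y => y ^ (n + 2) := by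
      filter_upwards [Ioi_mem_nhds h] with z hz
      rw [max_eq_left (le_of_lt hz)]
    exact (hasDerivAt_pow (n + 2) y).congr_of_eventuallyEq this

theorem contDiff_pospow2 : ContDiff ℝ 1 (fun y : ℝ => max y 0 ^ 2) := by
  rw [contDiff_one_iff_deriv]
  refine ⟨fun y => (hasDerivAt_pospow 0 y).differentiableAt, ?_⟩
  have : deriv (fun y : ℝ => max y 0 ^ 2) = fun y => ((0 + 2 : ℕ) : ℝ) * max y 0 ^ (0 + 1) :=
    funext fun y => (hasDerivAt_pospow 0 y).deriv
  rw [this]; fun_prop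

theorem contDiff_pospow3 : ContDiff ℝ 2 (fun y : ℝ => max y 0 ^ 3) := by
  have : ContDiff ℝ (1 + 1) (fun y : ℝ => max y 0 ^ 3) := by
    rw [contDiff_succ_iff_deriv]
    refine ⟨fun y => (hasDerivAt_pospow 1 y).differentiableAt, by simp, ?_⟩
    have : deriv (fun y : ℝ => max y 0 ^ 3) = fun y => ((1 + 2 : ℕ) : ℝ) * max y 0 ^ (1 + 1) :=
      funext fun y => (hasDerivAt_pospow 1 y).deriv
    rw [this]
    exact contDiff_const.mul contDiff_pospow2
  exact this

/-- profile of the weight -/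
def Phi (R h s : ℝ) : ℝ := max (1 - s / R) 0 ^ 3 * Real.exp (-h * (s + 1))
def Phi1 (R h s : ℝ) : ℝ :=
  (-(3 / R) * max (1 - s / R) 0 ^ 2 - h * max (1 - s / R) 0 ^ 3) * Real.exp (-h * (s + 1))
def Phi2 (R h s : ℝ) : ℝ :=
  (6 / R ^ 2 * max (1 - s / R) 0 + 6 * h / R * max (1 - s / R) 0 ^ 2
    + h ^ 2 * max (1 - s / R) 0 ^ 3) * Real.exp (-h * (s + 1))

theorem Phi_contDiff (R h : ℝ) : ContDiff ℝ 2 (Phi R h) := by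
  unfold Phi
  have h1 : ContDiff ℝ 2 (fun s : ℝ => 1 - s / R) := contDiff_const.sub (contDiff_id.div_const R)
  exact (contDiff_pospow3.comp h1).mul
    (Real.contDiff_exp.comp (contDiff_const.mul (contDiff_id.add contDiff_const)))

theorem cut_hasDerivAt (n : ℕ) (R s : ℝ) :
    HasDerivAt (fun s : ℝ => max (1 - s / R) 0 ^ (n + 2))
      ((n + 2 : ℕ) * max (1 - s / R) 0 ^ (n + 1) * (-(1 / R))) s := by
  have h1 : HasDerivAt (fun s : ℝ => 1 - s / R) (-(1 / R)) s :=
    ((hasDerivAt_id s).div_const R).const_sub 1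
  exact HasDerivAt.comp (h₂ := fun y : ℝ => max y 0 ^ (n + 2)) s (hasDerivAt_pospow n _) h1

theorem expw_hasDerivAt (h s : ℝ) : HasDerivAt (fun s : ℝ => Real.exp (-h * (s + 1)))
    (Real.exp (-h * (s + 1)) * (-h * 1)) s :=
  (((hasDerivAt_id s).add_const 1).const_mul (-h)).exp

theorem Phi_hasDerivAt (R h s : ℝ) : HasDerivAt (Phi R h) (Phi1 R h s) s := by
  have h1 : HasDerivAt (fun s : ℝ => max (1 - s / R) 0 ^ 3) _ s := cut_hasDerivAt 1 R s
  have h3 : HasDerivAt (Phi R h) _ s := h1.mul (expw_hasDerivAt h s)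
  refine h3.congr_deriv ?_
  unfold Phi1; push_cast; ring

theorem Phi1_hasDerivAt (R h s : ℝ) : HasDerivAt (Phi1 R h) (Phi2 R h s) s := by
  have h1 : HasDerivAt (fun s : ℝ => max (1 - s / R) 0 ^ 3) _ s := cut_hasDerivAt 1 R s
  have h2 : HasDerivAt (fun s : ℝ => max (1 - s / R) 0 ^ 2) _ s := cut_hasDerivAt 0 R s
  have h3 : HasDerivAt (Phi1 R h) _ s :=
    ((h2.const_mul (-(3 / R))).sub (h1.const_mul h)).mul (expw_hasDerivAt h s)
  refine h3.congr_deriv ?_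
  unfold Phi2; simp only [Pi.sub_apply]; push_cast; ring

/-- The spatial integral inequality (Kato type) at a fixed time. -/
theorem spatial_ineq {d m : ℕ} (X : Fin m → (Fin d → ℝ) → (Fin d → ℝ))
    (hXsm : ∀ i, ContDiff ℝ (⊤ : ℕ∞) (X i)) (hXdivfree : ∀ i x, ediv (X i) x = 0)
    (σ : ℝ) (hσ : 0 < σ) (b : (Fin d → ℝ) → Fin m → ℝ) (hb : ∀ i, ContDiff ℝ 1 (fun y => b y i))
    (q : (Fin d → ℝ) → ℝ) (MQ : ℝ) (hq : ∀ x, |q x| ≤ MQ)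
    {η η1 η2 : ℝ → ℝ} (hη : ContDiff ℝ 2 η) (hη1 : ContDiff ℝ 1 η1)
    (hd1 : ∀ v, HasDerivAt η (η1 v) v) (hd2 : ∀ v, HasDerivAt η1 (η2 v) v)
    (hη2 : ∀ v, 0 ≤ η2 v) (hη0 : ∀ v, 0 ≤ η v) (hηm : ∀ v, |v * η1 v| ≤ 2 * η v)
    (v : (Fin d → ℝ) → ℝ) (hv : ContDiff ℝ 2 v)
    (ψ : (Fin d → ℝ) → ℝ) (hψ : ContDiff ℝ 2 ψ) (hψ0 : ∀ x, 0 ≤ ψ x) (hψc : HasCompactSupport ψ)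
    (z : (Fin d → ℝ) → ℝ)
    (hz : ∀ x, z x = σ * hLap X v x - (∑ i, b x i * vderiv (X i) v x) - q x * v x)
    (hzi : Integrable (fun x => η1 (v x) * z x * ψ x))
    (A : (Fin d → ℝ) → ℝ)
    (hA : ∀ x, A x = σ * hLap X ψ x + hdiv X b x * ψ x + (∑ i, b x i * vderiv (X i) ψ x)
      + 2 * MQ * ψ x) :
    Integrable (fun x => η (v x) * A x) ∧
    ∫ x, η1 (v x) * z x * ψ x ≤ ∫ x, η (v x) * A x := by
  have hXc := fun i => (hXsm i).continuous
  have hv1 : ContDiff ℝ 1 v := hv.of_le (by norm_num)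
  have hψ1 : ContDiff ℝ 1 ψ := hψ.of_le (by norm_num)
  set w : (Fin d → ℝ) → ℝ := fun x => η (v x) with hw
  have hwC : ContDiff ℝ 2 w := hη.comp hv
  have hw1 : ContDiff ℝ 1 w := hwC.of_le (by norm_num)
  have hvd : Differentiable ℝ v := hv.differentiable (by norm_num)
  have e1 : ∀ i, vderiv (X i) w = fun x => η1 (v x) * vderiv (X i) v x := fun i =>
    funext fun x => vderiv_comp (X i) (hd1 (v x)) (hvd x)
  have hη1v : Differentiable ℝ (fun x => η1 (v x)) :=
    (hη1.comp hv1).differentiable (by norm_num)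
  have e2 : ∀ i x, vderiv (X i) (vderiv (X i) w) x
      = η1 (v x) * vderiv (X i) (vderiv (X i) v) x + η2 (v x) * (vderiv (X i) v x) ^ 2 := by
    intro i x
    rw [e1 i, vderiv_mul (X i) (hη1v x)
      ((vderiv_contDiff (hXsm i) hv).differentiable (by norm_num) x),
      vderiv_comp (X i) (hd2 (v x)) (hvd x)]
    ring
  -- integrability of the pieces
  have iA : ∀ i, Integrable (fun x => ψ x * vderiv (X i) (vderiv (X i) w) x) := fun i =>
    (hψ.continuous.mul (vderiv_continuous (hXc i)
      (vderiv_contDiff (hXsm i) hwC))).integrable_of_hasCompactSupport hψc.mul_right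
  have iA' : ∀ i, Integrable (fun x => w x * vderiv (X i) (vderiv (X i) ψ) x) := fun i =>
    (hwC.continuous.mul (vderiv_continuous (hXc i)
      (vderiv_contDiff (hXsm i) hψ))).integrable_of_hasCompactSupport
      (vderiv_compactSupport _ (vderiv_compactSupport _ hψc)).mul_left
  have hbψ : ∀ i, ContDiff ℝ 1 (fun x => b x i * ψ x) := fun i => (hb i).mul hψ1
  have hbψc : ∀ i, HasCompactSupport (fun x => b x i * ψ x) := fun i => hψc.mul_left
  have iB : ∀ i, Integrable (fun x => (b x i * ψ x) * vderiv (X i) w x) := fun i =>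
    ((hbψ i).continuous.mul (vderiv_continuous (hXc i) hw1)).integrable_of_hasCompactSupport
      (hbψc i).mul_right
  have iB' : ∀ i, Integrable (fun x => w x * vderiv (X i) (fun x => b x i * ψ x) x) := fun i =>
    (hwC.continuous.mul (vderiv_continuous (hXc i) (hbψ i))).integrable_of_hasCompactSupport
      (vderiv_compactSupport _ (hbψc i)).mul_left
  have iC : Integrable (fun x => 2 * MQ * (w x * ψ x)) :=
    ((hwC.continuous.mul hψ.continuous).integrable_of_hasCompactSupport hψc.mul_left).const_mul _
  have iAs : Integrable (fun x => σ * ∑ i, ψ x * vderiv (X i) (vderiv (X i) w) x) :=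
    (integrable_finsetSum _ fun i _ => iA i).const_mul _
  have iAs' : Integrable (fun x => σ * ∑ i, w x * vderiv (X i) (vderiv (X i) ψ) x) :=
    (integrable_finsetSum _ fun i _ => iA' i).const_mul _
  have iBs : Integrable (fun x => ∑ i, (b x i * ψ x) * vderiv (X i) w x) :=
    integrable_finsetSum _ fun i _ => iB i
  have iBs' : Integrable (fun x => ∑ i, w x * vderiv (X i) (fun x => b x i * ψ x) x) :=
    integrable_finsetSum _ fun i _ => iB' i
  have eR : (fun x => w x * A x) = fun x => (σ * ∑ i, w x * vderiv (X i) (vderiv (X i) ψ) x)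
      + (∑ i, w x * vderiv (X i) (fun x => b x i * ψ x) x) + 2 * MQ * (w x * ψ x) := by
    funext x
    rw [hA x]
    have : ∀ i, vderiv (X i) (fun x => b x i * ψ x) x
        = b x i * vderiv (X i) ψ x + ψ x * vderiv (X i) (fun y => b y i) x := fun i =>
      vderiv_mul (X i) ((hb i).differentiable (by norm_num) x)
        (hψ1.differentiable (by norm_num) x)
    simp_rw [this]
    unfold hLap hdiv
    rw [← Finset.mul_sum, ← Finset.mul_sum, Finset.sum_add_distrib, ← Finset.mul_sum]
    ring
  refine ⟨by rw [show (fun x => η (v x) * A x) = _ from eR]; exact (iAs'.add iBs').add iC, ?_⟩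
  calc ∫ x, η1 (v x) * z x * ψ x
      ≤ ∫ x, ((σ * ∑ i, ψ x * vderiv (X i) (vderiv (X i) w) x)
        - (∑ i, (b x i * ψ x) * vderiv (X i) w x) + 2 * MQ * (w x * ψ x)) := by
        refine integral_mono hzi ((iAs.sub iBs).add iC) fun x => ?_
        simp only [hz x]
        have s1 : η1 (v x) * ψ x * hLap X v x ≤ ∑ i, ψ x * vderiv (X i) (vderiv (X i) w) x := by
          unfold hLap
          rw [Finset.mul_sum]
          refine Finset.sum_le_sum fun i _ => ?_
          rw [e2]
          nlinarith [mul_nonneg (hψ0 x) (mul_nonneg (hη2 (v x)) (sq_nonneg (vderiv (X i) v x)))]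
        have s2 : ∑ i, (b x i * ψ x) * vderiv (X i) w x
            = η1 (v x) * ψ x * ∑ i, b x i * vderiv (X i) v x := by
          rw [Finset.mul_sum]
          refine Finset.sum_congr rfl fun i _ => ?_
          rw [e1]; ring
        have s3 : -(q x * (v x * η1 (v x))) ≤ 2 * MQ * w x := by
          have h1 := hηm (v x)
          have h2 := hq x
          have h3 : |q x * (v x * η1 (v x))| ≤ MQ * (2 * η (v x)) := by
            rw [abs_mul]
            exact mul_le_mul h2 h1 (abs_nonneg _) ((abs_nonneg _).trans h2)
          have := neg_abs_le (q x * (v x * η1 (v x)))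
          simp only [hw]; linarith
        have s4 := mul_le_mul_of_nonneg_right s3 (hψ0 x)
        rw [s2]
        have s5 := mul_le_mul_of_nonneg_left s1 hσ.le
        nlinarith
    _ = ∫ x, w x * A x := by
        have j1 : Integrable (fun x => (σ * ∑ i, ψ x * vderiv (X i) (vderiv (X i) w) x)
            - ∑ i, (b x i * ψ x) * vderiv (X i) w x) := iAs.sub iBs
        have j2 : Integrable (fun x => (σ * ∑ i, w x * vderiv (X i) (vderiv (X i) ψ) x)
            + ∑ i, w x * vderiv (X i) (fun x => b x i * ψ x) x) := iAs'.add iBs'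
        rw [eR, integral_add j1 iC, integral_sub iAs iBs,
          integral_add j2 iC, integral_add iAs' iBs', integral_const_mul,
          integral_const_mul, integral_const_mul, integral_finsetSum _ fun i _ => iA i,
          integral_finsetSum _ fun i _ => iA' i, integral_finsetSum _ fun i _ => iB i,
          integral_finsetSum _ fun i _ => iB' i]
        have t1 : ∀ i, ∫ x, ψ x * vderiv (X i) (vderiv (X i) w) x
            = ∫ x, w x * vderiv (X i) (vderiv (X i) ψ) x := fun i =>
          vderiv_ibp2 (hXsm i) (hXdivfree i) hwC hψ hψc
        have t2 : ∀ i, ∫ x, (b x i * ψ x) * vderiv (X i) w x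
            = - ∫ x, w x * vderiv (X i) (fun x => b x i * ψ x) x := fun i =>
          vderiv_ibp (hXsm i) (hXdivfree i) hw1 (hbψ i) (hbψc i)
        simp_rw [t1, t2]
        rw [Finset.sum_neg_distrib, sub_neg_eq_add]

set_option maxHeartbeats 2000000 in
/-- pointwise bound for the adjoint operator applied to the weight -/
theorem adjoint_bound {d m : ℕ} (X : Fin m → (Fin d → ℝ) → (Fin d → ℝ))
    (hXsm : ∀ i, ContDiff ℝ (⊤ : ℕ∞) (X i))
    (σ : ℝ) (hσ : 0 < σ) (b : (Fin d → ℝ) → Fin m → ℝ) (MB MdivB MQ : ℝ)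
    (hMB : 0 ≤ MB) (hMQ : 0 ≤ MQ)
    (S : (Fin d → ℝ) → ℝ) (hS : ContDiff ℝ 2 S) (hS0 : ∀ x, 0 ≤ S x)
    (C : ℝ) (hC : 0 ≤ C) (hgrad : ∀ x, hgradSq X S x ≤ C * S x) (hlap : ∀ x, |hLap X S x| ≤ C)
    (β H h K R : ℝ) (hβ : 0 < β) (hh : β + 1 ≤ h) (hH : h ≤ H) (hR : 1 ≤ R)
    (hK : σ * H ^ 2 * C + σ * C * H + MdivB + MB * H * (m + C) + 2 * MQ ≤ K)
    (x : Fin d → ℝ) (hb : ∀ i, |b x i| ≤ MB) (hdb : |hdiv X b x| ≤ MdivB) :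
    -(K * (S x + 1)) * Phi R h (S x) + (σ * hLap X (fun y => Phi R h (S y)) x
      + hdiv X b x * Phi R h (S x) + (∑ i, b x i * vderiv (X i) (fun y => Phi R h (S y)) x)
      + 2 * MQ * Phi R h (S x)) ≤
    {y | S y ≤ R}.indicator
      (fun y => (9 * σ * C + 6 * H * σ * C + 3 * MB * (m + C)) / R * Real.exp (-β * (S y + 1))) x := by
  have hSd : Differentiable ℝ S := hS.differentiable (by norm_num)
  have e1 : ∀ i, vderiv (X i) (fun y => Phi R h (S y))
      = fun x => Phi1 R h (S x) * vderiv (X i) S x := fun i =>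
    funext fun x => vderiv_comp (X i) (Phi_hasDerivAt R h (S x)) (hSd x)
  have e2 : ∀ i, vderiv (X i) (vderiv (X i) (fun y => Phi R h (S y))) x
      = Phi1 R h (S x) * vderiv (X i) (vderiv (X i) S) x
        + Phi2 R h (S x) * (vderiv (X i) S x) ^ 2 := by
    intro i
    have hdd : DifferentiableAt ℝ (fun x => Phi1 R h (S x)) x :=
      (Phi1_hasDerivAt R h (S x)).differentiableAt.comp x (hSd x)
    rw [e1 i, vderiv_mul (X i) hdd
      ((vderiv_contDiff (hXsm i) hS).differentiable (by norm_num) x),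
      vderiv_comp (X i) (Phi1_hasDerivAt R h (S x)) (hSd x)]
    ring
  have e3 : hLap X (fun y => Phi R h (S y)) x
      = Phi1 R h (S x) * hLap X S x + Phi2 R h (S x) * hgradSq X S x := by
    unfold hLap hgradSq
    simp_rw [e2]
    rw [Finset.sum_add_distrib, ← Finset.mul_sum, ← Finset.mul_sum]
  have e4 : ∑ i, b x i * vderiv (X i) (fun y => Phi R h (S y)) x
      = Phi1 R h (S x) * ∑ i, b x i * vderiv (X i) S x := by
    rw [Finset.mul_sum]
    refine Finset.sum_congr rfl fun i _ => ?_
    rw [e1]; ring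
  rw [e3, e4]
  have hsum : |∑ i, b x i * vderiv (X i) S x| ≤ MB * ((m + C) * (S x + 1)) := by
    calc |∑ i, b x i * vderiv (X i) S x| ≤ ∑ i, |b x i * vderiv (X i) S x| :=
          Finset.abs_sum_le_sum_abs _ _
      _ ≤ ∑ i, MB * (1 + (vderiv (X i) S x) ^ 2) := by
          refine Finset.sum_le_sum fun i _ => ?_
          rw [abs_mul]
          refine mul_le_mul (hb i) ?_ (abs_nonneg _) hMB
          nlinarith [sq_abs (vderiv (X i) S x), sq_nonneg (|vderiv (X i) S x| - 1),
            abs_nonneg (vderiv (X i) S x)]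
      _ = MB * (m + hgradSq X S x) := by
          rw [← Finset.mul_sum, Finset.sum_add_distrib]; simp [hgradSq]
      _ ≤ MB * ((m + C) * (S x + 1)) := by
          refine mul_le_mul_of_nonneg_left ?_ hMB
          have := hgrad x
          have hm : (0:ℝ) ≤ m := Nat.cast_nonneg m
          nlinarith [hS0 x, mul_nonneg hm (hS0 x)]
  have hΓ0 : 0 ≤ hgradSq X S x := Finset.sum_nonneg fun i _ => sq_nonneg _
  have hΓ : hgradSq X S x ≤ C * (S x + 1) := by linarith [hgrad x]
  have hL : |hLap X S x| ≤ C * (S x + 1) := by nlinarith [hlap x, mul_nonneg hC (hS0 x)]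
  by_cases hx : S x ≤ R
  swap
  · have : max (1 - S x / R) 0 = 0 := by
      apply max_eq_right
      rw [sub_nonpos, le_div_iff₀ (by linarith)]; linarith
    rw [indicator_of_notMem (by simpa using hx)]
    simp [Phi, Phi1, Phi2, this]
  rw [indicator_of_mem (by simpa using hx)]
  set s1 := S x + 1 with hs1
  have hs1p : 1 ≤ s1 := by linarith [hS0 x]
  set y := max (1 - S x / R) 0 with hy
  have hy0 : 0 ≤ y := le_max_right _ _
  have hy1 : y ≤ 1 := max_le (by have := div_nonneg (hS0 x) (by linarith : (0:ℝ) ≤ R); linarith) zero_le_one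
  set E := Real.exp (-h * s1) with hE
  have hE0 : 0 < E := Real.exp_pos _
  have hEs : E * s1 ≤ Real.exp (-β * s1) := by
    have h1 : s1 ≤ Real.exp s1 := by linarith [Real.add_one_le_exp s1]
    calc E * s1 ≤ Real.exp (-(β + 1) * s1) * Real.exp s1 := by
          refine mul_le_mul ?_ h1 (by linarith) (Real.exp_pos _).le
          apply Real.exp_le_exp.2
          nlinarith
      _ = Real.exp (-β * s1) := by rw [← Real.exp_add]; congr 1; ring
  set r := 1 / R with hr
  have hr0 : 0 ≤ r := by positivity
  have hr1 : r ≤ 1 := by rw [hr, div_le_one (by linarith)]; exact hR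
  have p0 : Phi R h (S x) = y ^ 3 * E := rfl
  have p1 : Phi1 R h (S x) = -((3 * r * y ^ 2 + h * y ^ 3) * E) := by
    simp only [Phi1, hr, ← hy, ← hs1, ← hE]; ring
  have p2 : Phi2 R h (S x) = (6 * r * r * y + 6 * h * r * y ^ 2 + h ^ 2 * y ^ 3) * E := by
    simp only [Phi2, hr, ← hy, ← hs1, ← hE]; field_simp
  have hh0 : 0 ≤ h := by linarith
  -- bounds for coefficients
  have ha : 3 * r * y ^ 2 + h * y ^ 3 ≤ 3 * r + H * y ^ 3 := by
    have : y ^ 2 ≤ 1 := pow_le_one₀ hy0 hy1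
    have : r * y ^ 2 ≤ r := by nlinarith
    have : h * y ^ 3 ≤ H * y ^ 3 := mul_le_mul_of_nonneg_right hH (by positivity)
    linarith
  have ha0 : 0 ≤ 3 * r * y ^ 2 + h * y ^ 3 := by positivity
  have hc : 6 * r * r * y + 6 * h * r * y ^ 2 + h ^ 2 * y ^ 3
      ≤ 6 * r + 6 * H * r + H ^ 2 * y ^ 3 := by
    have : y ^ 2 ≤ 1 := pow_le_one₀ hy0 hy1
    have : r * y ≤ 1 := by nlinarith
    have q1 : r * (r * y) ≤ r := by nlinarith
    have q2 : h * r * y ^ 2 ≤ H * r := by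
      calc h * r * y ^ 2 ≤ h * r * 1 := by gcongr
        _ ≤ H * r := by rw [mul_one]; gcongr
    have : h ^ 2 * y ^ 3 ≤ H ^ 2 * y ^ 3 := by gcongr
    nlinarith
  have hc0 : 0 ≤ 6 * r * r * y + 6 * h * r * y ^ 2 + h ^ 2 * y ^ 3 := by positivity
  set a := 3 * r * y ^ 2 + h * y ^ 3
  set c := 6 * r * r * y + 6 * h * r * y ^ 2 + h ^ 2 * y ^ 3
  have hs10 : 0 ≤ s1 := by linarith
  have hH0 : 0 ≤ H := hh0.trans hH
  have b1 : -a * hLap X S x ≤ (3 * r + H * y ^ 3) * (C * s1) := by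
    have : -(hLap X S x) ≤ C * s1 := (neg_le_abs _).trans hL
    calc -a * hLap X S x = a * (-(hLap X S x)) := by ring
      _ ≤ a * (C * s1) := by gcongr
      _ ≤ _ := by gcongr
  have b2 : c * hgradSq X S x ≤ (6 * r + 6 * H * r + H ^ 2 * y ^ 3) * (C * s1) := by
    calc c * hgradSq X S x ≤ c * (C * s1) := by gcongr
      _ ≤ _ := by gcongr
  have b3 : -a * (∑ i, b x i * vderiv (X i) S x)
      ≤ (3 * r + H * y ^ 3) * (MB * ((m + C) * s1)) := by
    have : -(∑ i, b x i * vderiv (X i) S x) ≤ MB * ((m + C) * s1) := (neg_le_abs _).trans hsum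
    calc -a * (∑ i, b x i * vderiv (X i) S x) = a * (-(∑ i, b x i * vderiv (X i) S x)) := by ring
      _ ≤ a * (MB * ((m + C) * s1)) := by gcongr
      _ ≤ _ := by gcongr
  have hy3 : 0 ≤ y ^ 3 := by positivity
  have hMd : 0 ≤ MdivB := (abs_nonneg _).trans hdb
  have b4 : hdiv X b x * y ^ 3 ≤ MdivB * s1 * y ^ 3 := by
    refine mul_le_mul_of_nonneg_right ?_ hy3
    have := (le_abs_self _).trans hdb
    nlinarith
  have b5 : 2 * MQ * y ^ 3 ≤ 2 * MQ * s1 * y ^ 3 := by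
    refine mul_le_mul_of_nonneg_right ?_ hy3
    nlinarith
  have b6 : (σ * H ^ 2 * C + σ * C * H + MdivB + MB * H * (m + C) + 2 * MQ) * (s1 * y ^ 3)
      ≤ K * (s1 * y ^ 3) := mul_le_mul_of_nonneg_right hK (by positivity)
  set K1 := 9 * σ * C + 6 * H * σ * C + 3 * MB * (m + C) with hK1
  have hK10 : 0 ≤ K1 := by positivity
  have main : -(K * s1) * y ^ 3 + (σ * (-a * hLap X S x + c * hgradSq X S x)
      + hdiv X b x * y ^ 3 + -a * (∑ i, b x i * vderiv (X i) S x) + 2 * MQ * y ^ 3)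
      ≤ K1 * r * s1 := by
    have b12 := mul_le_mul_of_nonneg_left (add_le_add b1 b2) hσ.le
    rw [hK1]
    linarith
  have main2 := mul_le_mul_of_nonneg_right main hE0.le
  have f : K1 * r * (E * s1) ≤ K1 * r * Real.exp (-β * s1) :=
    mul_le_mul_of_nonneg_left hEs (by positivity)
  rw [p0, p1, p2]
  have : K1 / R = K1 * r := by rw [hr]; ring
  rw [this]
  linarith

theorem param_deriv {d : ℕ} {a b : ℝ} {k : Set (Fin d → ℝ)} (hk : IsCompact k)
    (G G' : ℝ → (Fin d → ℝ) → ℝ)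
    (hG : ContinuousOn (fun p : ℝ × (Fin d → ℝ) => G p.1 p.2) (Icc a b ×ˢ univ))
    (hG' : ContinuousOn (fun p : ℝ × (Fin d → ℝ) => G' p.1 p.2) (Ioo a b ×ˢ univ))
    (hd : ∀ t ∈ Ioo a b, ∀ x, HasDerivAt (fun s => G s x) (G' t x) t)
    (h0 : ∀ t x, x ∉ k → G t x = 0) (h0' : ∀ t x, x ∉ k → G' t x = 0)
    (t : ℝ) (ht : t ∈ Ioo a b) :
    HasDerivAt (fun t => ∫ x, G t x) (∫ x, G' t x) t := by
  obtain ⟨δ, hδ, hsub⟩ := Metric.nhds_basis_closedBall.mem_iff.1 (isOpen_Ioo.mem_nhds ht)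
  have hc : ∀ s ∈ Icc a b, Continuous (G s) := fun s hs => by
    rw [← continuousOn_univ]
    exact hG.comp (f := fun x => (s, x)) (by fun_prop) fun x _ => ⟨hs, mem_univ _⟩
  have hc' : ∀ s ∈ Ioo a b, Continuous (G' s) := fun s hs => by
    rw [← continuousOn_univ]
    exact hG'.comp (f := fun x => (s, x)) (by fun_prop) fun x _ => ⟨hs, mem_univ _⟩
  have hcomp : IsCompact (Metric.closedBall t δ ×ˢ k) := (isCompact_closedBall t δ).prod hk
  obtain ⟨M, hM⟩ := hcomp.exists_bound_of_continuousOn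
    (hG'.mono (prod_mono hsub (subset_univ _)))
  refine (hasDerivAt_integral_of_dominated_loc_of_deriv_le (bound := k.indicator fun _ => M)
    (Metric.closedBall_mem_nhds t hδ) ?_ ?_ ?_ ?_ ?_ ?_).2
  · filter_upwards [isOpen_Ioo.mem_nhds ht] with s hs
    exact (hc s (Ioo_subset_Icc_self hs)).aestronglyMeasurable
  · exact (hc t (Ioo_subset_Icc_self ht)).integrable_of_hasCompactSupport
      (HasCompactSupport.intro hk (h0 t))
  · exact (hc' t ht).aestronglyMeasurable
  · refine Filter.Eventually.of_forall fun x s hs => ?_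
    by_cases hx : x ∈ k
    · rw [indicator_of_mem hx]; exact hM (s, x) ⟨hs, hx⟩
    · rw [indicator_of_notMem hx, h0' s x hx]; simp
  · rw [integrable_indicator_iff hk.measurableSet]
    exact integrableOn_const hk.measure_lt_top.ne
  · exact Filter.Eventually.of_forall fun x s hs => hd s (hsub hs) x

theorem Phi_zero {R h s : ℝ} (hR : 1 ≤ R) (hs : R < s) : Phi R h s = 0 := by
  have : max (1 - s / R) 0 = 0 := by
    apply max_eq_right
    rw [sub_nonpos, le_div_iff₀ (by linarith)]; linarith
  simp [Phi, this]

theorem Phi_nonneg (R h s : ℝ) : 0 ≤ Phi R h s := by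
  unfold Phi
  have := le_max_right (1 - s / R) 0
  positivity

theorem energy_estimate {d m : ℕ} (X : Fin m → (Fin d → ℝ) → (Fin d → ℝ))
    (hXsm : ∀ i, ContDiff ℝ (⊤ : ℕ∞) (X i)) (hXdivfree : ∀ i x, ediv (X i) x = 0)
    (σ T : ℝ) (hσ : 0 < σ)
    (B : ℝ → (Fin d → ℝ) → Fin m → ℝ) (MB : ℝ) (hMB : 0 ≤ MB)
    (hBbd : ∀ t ∈ Set.Icc (0:ℝ) T, ∀ x i, |B t x i| ≤ MB)
    (hBC1 : ∀ t ∈ Set.Icc (0:ℝ) T, ∀ i, ContDiff ℝ 1 (fun y => B t y i))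
    (MdivB : ℝ) (hdivBbd : ∀ t ∈ Set.Icc (0:ℝ) T, ∀ x, |hdiv X (B t) x| ≤ MdivB)
    (Q : ℝ → (Fin d → ℝ) → ℝ) (MQ : ℝ) (hMQ : 0 ≤ MQ)
    (hQbd : ∀ t ∈ Set.Icc (0:ℝ) T, ∀ x, |Q t x| ≤ MQ)
    (S : (Fin d → ℝ) → ℝ) (hS : ContDiff ℝ 2 S) (hS0 : ∀ x, 0 ≤ S x)
    (hSk : ∀ R, IsCompact {x | S x ≤ R})
    (C : ℝ) (hC : 0 ≤ C) (hgrad : ∀ x, hgradSq X S x ≤ C * S x) (hlap : ∀ x, |hLap X S x| ≤ C)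
    (u : ℝ → (Fin d → ℝ) → ℝ)
    (hu : ContinuousOn (fun p : ℝ × (Fin d → ℝ) => u p.1 p.2) (Set.Icc 0 T ×ˢ Set.univ))
    (hut : ∀ (x : Fin d → ℝ), ∀ t ∈ Set.Ioo (0:ℝ) T, DifferentiableAt ℝ (fun s => u s x) t)
    (hux : ∀ t ∈ Set.Ioo (0:ℝ) T, ContDiff ℝ 2 (u t))
    (hutcont : ContinuousOn (fun p : ℝ × (Fin d → ℝ) => deriv (fun s => u s p.2) p.1)
        (Set.Ioo 0 T ×ˢ Set.univ))
    (hPDE : ∀ t ∈ Set.Ioo (0:ℝ) T, ∀ x,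
        deriv (fun s => u s x) t = σ * hLap X (u t) x
          - (∑ i, B t x i * vderiv (X i) (u t) x) - Q t x * u t x)
    {η η1 η2 : ℝ → ℝ} (hη : ContDiff ℝ 2 η) (hη1 : ContDiff ℝ 1 η1)
    (hd1 : ∀ v, HasDerivAt η (η1 v) v) (hd2 : ∀ v, HasDerivAt η1 (η2 v) v)
    (hη2 : ∀ v, 0 ≤ η2 v) (hη0 : ∀ v, 0 ≤ η v) (hηabs : ∀ v, η v ≤ |v|)
    (hηm : ∀ v, |v * η1 v| ≤ 2 * η v) (hηz : η 0 = 0)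
    (β : ℝ) (hβ : 0 < β)
    (hint : MeasureTheory.IntegrableOn
        (fun p : ℝ × (Fin d → ℝ) => |u p.1 p.2| * Real.exp (-β * (S p.2 + 1)))
        (Set.Ioc 0 T ×ˢ Set.univ))
    (K : ℝ) (hK0 : 0 < K)
    (hK : σ * (β + 2) ^ 2 * C + σ * C * (β + 2) + MdivB + MB * (β + 2) * (m + C) + 2 * MQ ≤ K)
    (a b : ℝ) (ha : 0 ≤ a) (hab : a < b) (hbT : b ≤ T) (hba : K * (b - a) ≤ 1)
    (hua : ∀ x, u a x = 0) (R : ℝ) (hR : 1 ≤ R) :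
    ∫ x, η (u b x) * Phi R (β + 1 + K * (b - a)) (S x) ≤
      (9 * σ * C + 6 * (β + 2) * σ * C + 3 * MB * (m + C)) / R *
      ∫ p in Set.Ioc 0 T ×ˢ Set.univ, |u p.1 p.2| * Real.exp (-β * (S p.2 + 1)) := by
  set K1 := 9 * σ * C + 6 * (β + 2) * σ * C + 3 * MB * (m + C) with hK1
  have hK10 : 0 ≤ K1 := by positivity
  set k : Set (Fin d → ℝ) := {x | S x ≤ R} with hkdef
  have hk : IsCompact k := hSk R
  set hh : ℝ → ℝ := fun t => β + 1 + K * (t - a) with hhdef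
  set G : ℝ → (Fin d → ℝ) → ℝ := fun t x => η (u t x) * Phi R (hh t) (S x) with hG
  set G' : ℝ → (Fin d → ℝ) → ℝ := fun t x =>
    η1 (u t x) * deriv (fun s => u s x) t * Phi R (hh t) (S x)
      + η (u t x) * (-(K * (S x + 1)) * Phi R (hh t) (S x)) with hG'
  have hSc := hS.continuous
  have hPc : Continuous (fun p : ℝ × (Fin d → ℝ) => Phi R (hh p.1) (S p.2)) := by
    simp only [Phi, hhdef]; fun_prop
  have hPcx : ∀ t, Continuous (fun x => Phi R (hh t) (S x)) := fun t =>
    hPc.comp (by fun_prop : Continuous fun x : Fin d → ℝ => (t, x))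
  have hPsupp : ∀ t x, x ∉ k → Phi R (hh t) (S x) = 0 := fun t x hx =>
    Phi_zero hR (by simpa [hkdef] using hx)
  have hPt : ∀ t x, HasDerivAt (fun t => Phi R (hh t) (S x))
      (-(K * (S x + 1)) * Phi R (hh t) (S x)) t := by
    intro t x
    have h1 : HasDerivAt hh K t := by
      refine HasDerivAt.congr_deriv (f := hh)
        ((((hasDerivAt_id t).sub_const a).const_mul K).const_add (β + 1)) ?_
      ring
    have h2 := ((h1.neg.mul_const (S x + 1)).exp).const_mul (max (1 - S x / R) 0 ^ 3)
    refine HasDerivAt.congr_deriv (f := fun t => Phi R (hh t) (S x)) h2 ?_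
    simp only [Phi, Pi.neg_apply]; ring
  have hIcc : Icc a b ⊆ Icc 0 T := Icc_subset_Icc ha hbT
  have hIoo : Ioo a b ⊆ Ioo 0 T := Ioo_subset_Ioo ha hbT
  have huab := hu.mono (prod_mono hIcc (subset_univ univ))
  have hGc : ContinuousOn (fun p : ℝ × (Fin d → ℝ) => G p.1 p.2) (Icc a b ×ˢ univ) :=
    (hη.continuous.comp_continuousOn huab).mul hPc.continuousOn
  have huab' := huab.mono (prod_mono Ioo_subset_Icc_self (subset_univ univ))
  have hG'c : ContinuousOn (fun p : ℝ × (Fin d → ℝ) => G' p.1 p.2) (Ioo a b ×ˢ univ) := by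
    refine (((hη1.continuous.comp_continuousOn huab').mul
      (hutcont.mono (prod_mono hIoo (subset_univ univ)))).mul hPc.continuousOn).add
      ((hη.continuous.comp_continuousOn huab').mul
        (Continuous.continuousOn ?_))
    exact (by fun_prop : Continuous fun p : ℝ × (Fin d → ℝ) => -(K * (S p.2 + 1))).mul hPc
  have hGd : ∀ t ∈ Ioo a b, ∀ x, HasDerivAt (fun s => G s x) (G' t x) t := by
    intro t ht x
    have h1 : HasDerivAt (fun s => η (u s x)) _ t :=
      (hd1 (u t x)).comp t (hut x t (hIoo ht)).hasDerivAt
    exact h1.mul (hPt t x)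
  have hG0 : ∀ t x, x ∉ k → G t x = 0 := fun t x hx => by simp [hG, hPsupp t x hx]
  have hG'0 : ∀ t x, x ∉ k → G' t x = 0 := fun t x hx => by simp [hG', hPsupp t x hx]
  have hcont : ContinuousOn (fun t => ∫ x, G t x) (Icc a b) :=
    continuousOn_integral_of_compact_support hk hGc fun t x _ hx => hG0 t x hx
  have hderiv := param_deriv hk G G' hGc hG'c hGd hG0 hG'0
  set f : ℝ × (Fin d → ℝ) → ℝ := fun p => |u p.1 p.2| * Real.exp (-β * (S p.2 + 1)) with hf
  have hsub : Ioc a b ×ˢ k ⊆ Ioc 0 T ×ˢ univ :=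
    prod_mono (Ioc_subset_Ioc ha hbT) (subset_univ _)
  have hfi : IntegrableOn f (Ioc a b ×ˢ k) := hint.mono_set hsub
  have hfi' : IntegrableOn f (Ioc a b ×ˢ k) (volume.prod volume) := hfi
  set φ : ℝ → ℝ := fun t => K1 / R * ∫ x in k, f (t, x) with hφ
  have hφi : IntegrableOn φ (Icc a b) := by
    rw [integrableOn_Icc_iff_integrableOn_Ioc]
    have h1 := hfi'
    rw [IntegrableOn, ← Measure.prod_restrict] at h1
    exact h1.integral_prod_left.const_mul _
  have hle : ∀ t ∈ Ioo a b, ∫ x, G' t x ≤ φ t := by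
    intro t ht
    have ht0 : t ∈ Ioo 0 T := hIoo ht
    have htI : t ∈ Icc 0 T := Ioo_subset_Icc_self ht0
    have huc : Continuous (u t) := (hux t ht0).continuous
    have hutc : Continuous (fun x => deriv (fun s => u s x) t) := by
      rw [← continuousOn_univ]
      exact hutcont.comp (f := fun x => (t, x)) (by fun_prop) fun x _ => ⟨ht0, mem_univ _⟩
    have hψc : HasCompactSupport (fun x => Phi R (hh t) (S x)) :=
      HasCompactSupport.intro hk (hPsupp t)
    have i1 : Integrable (fun x =>
        η1 (u t x) * deriv (fun s => u s x) t * Phi R (hh t) (S x)) :=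
      (((hη1.continuous.comp huc).mul hutc).mul (hPcx t)).integrable_of_hasCompactSupport
        hψc.mul_left
    have i2 : Integrable (fun x => η (u t x) * (-(K * (S x + 1)) * Phi R (hh t) (S x))) := by
      refine Continuous.integrable_of_hasCompactSupport ?_ (hψc.mul_left).mul_left
      exact (hη.continuous.comp huc).mul
        ((by fun_prop : Continuous fun x : (Fin d → ℝ) => -(K * (S x + 1))).mul (hPcx t))
    obtain ⟨i3, hsp⟩ := spatial_ineq X hXsm hXdivfree σ hσ (B t) (hBC1 t htI) (Q t) MQ (hQbd t htI)
      hη hη1 hd1 hd2 hη2 hη0 hηm (u t) (hux t ht0) (fun x => Phi R (hh t) (S x))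
      ((Phi_contDiff R (hh t)).comp hS) (fun x => Phi_nonneg _ _ _) hψc
      (fun x => deriv (fun s => u s x) t) (fun x => hPDE t ht0 x) i1 _ (fun x => rfl)
    have hfk : IntegrableOn (fun x => K1 / R * f (t, x)) k := by
      refine ContinuousOn.integrableOn_compact hk (Continuous.continuousOn ?_)
      simp only [hf]; fun_prop
    calc ∫ x, G' t x = (∫ x, η1 (u t x) * deriv (fun s => u s x) t * Phi R (hh t) (S x))
          + ∫ x, η (u t x) * (-(K * (S x + 1)) * Phi R (hh t) (S x)) := integral_add i1 i2
      _ ≤ _ := add_le_add_left hsp _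
      _ = _ := (integral_add i3 i2).symm
      _ ≤ ∫ x, k.indicator (fun x => K1 / R * f (t, x)) x := by
          refine integral_mono (i3.add i2) ((integrable_indicator_iff hk.measurableSet).2 hfk) ?_
          intro x
          have hK' : K * (t - a) ≤ 1 := by
            have : K * (t - a) ≤ K * (b - a) :=
              mul_le_mul_of_nonneg_left (by linarith [ht.2]) hK0.le
            linarith
          have hK'' : 0 ≤ K * (t - a) := mul_nonneg hK0.le (by linarith [ht.1])
          have key := adjoint_bound X hXsm σ hσ (B t) MB MdivB MQ hMB hMQ S hS hS0 C hC hgrad hlap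
            β (β + 2) (hh t) K R hβ (by simp only [hhdef]; linarith)
            (by simp only [hhdef]; linarith) hR hK x (hBbd t htI x) (hdivBbd t htI x)
          have key2 := mul_le_mul_of_nonneg_left key (hη0 (u t x))
          simp only
          refine le_trans (le_of_eq ?_) (key2.trans ?_)
          · ring
          · by_cases hx : x ∈ k
            · rw [indicator_of_mem hx, indicator_of_mem hx]
              have e0 : 0 ≤ K1 / R * Real.exp (-β * (S x + 1)) := by positivity
              have := mul_le_mul_of_nonneg_right (hηabs (u t x)) e0
              simp only [hf]
              refine this.trans (le_of_eq ?_)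
              ring
            · rw [indicator_of_notMem hx, indicator_of_notMem hx, mul_zero]
      _ = φ t := by
          rw [integral_indicator hk.measurableSet, integral_const_mul]
  have hfin := intervalIntegral.sub_le_integral_of_hasDeriv_right_of_le hab.le hcont
    (fun t ht => (hderiv t ht).hasDerivWithinAt) hφi hle
  have hGa : ∫ x, G a x = 0 := by
    simp [hG, hua, hηz]
  have hφint : ∫ t in a..b, φ t = K1 / R * ∫ p in Ioc a b ×ˢ k, f p := by
    rw [intervalIntegral.integral_of_le hab.le, hφ, integral_const_mul]
    congr 1
    exact (setIntegral_prod f hfi').symm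
  have hmono : ∫ p in Ioc a b ×ˢ k, f p ≤ ∫ p in Ioc 0 T ×ˢ univ, f p := by
    refine setIntegral_mono_set hint (Filter.Eventually.of_forall fun p => ?_)
      hsub.eventuallyLE
    simp only [hf, Pi.zero_apply]; positivity
  have : K1 / R * ∫ p in Ioc a b ×ˢ k, f p ≤ K1 / R * ∫ p in Ioc 0 T ×ˢ univ, f p :=
    mul_le_mul_of_nonneg_left hmono (by positivity)
  rw [hGa, hφint] at hfin
  linarith

theorem sublevel_compact {d : ℕ} (N : (Fin d → ℝ) → ℝ) (hNcont : Continuous N)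
    (hNpos : ∀ x, 0 ≤ N x) (c₀ ε₀ : ℝ) (hc₀ : 0 < c₀) (hε₀ : 0 < ε₀)
    (hcoerc : ∀ x : Fin d → ℝ, 1 ≤ ‖x‖ → c₀ * ‖x‖ ^ ε₀ ≤ N x) (R : ℝ) :
    IsCompact {x | N x ^ 2 ≤ R} := by
  refine Metric.isCompact_of_isClosed_isBounded
    (isClosed_le (hNcont.pow 2) continuous_const) ?_
  refine (Metric.isBounded_closedBall (x := (0 : Fin d → ℝ))
    (r := max 1 ((√R / c₀) ^ ε₀⁻¹))).subset fun x hx => ?_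
  rw [mem_closedBall_zero_iff]
  by_cases h1 : 1 ≤ ‖x‖
  · apply le_max_of_le_right
    have h2 := hcoerc x h1
    have h3 : N x ≤ √R := Real.le_sqrt_of_sq_le hx
    rw [Real.le_rpow_inv_iff_of_pos (norm_nonneg _) (by positivity) hε₀, le_div_iff₀ hc₀]
    linarith
  · exact le_max_of_le_left (le_of_not_ge h1)

theorem core_uniqueness {d m : ℕ} (X : Fin m → (Fin d → ℝ) → (Fin d → ℝ))
    (hXsm : ∀ i, ContDiff ℝ (⊤ : ℕ∞) (X i)) (hXdivfree : ∀ i x, ediv (X i) x = 0)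
    (σ T : ℝ) (hσ : 0 < σ) (hT : 0 < T)
    (B : ℝ → (Fin d → ℝ) → Fin m → ℝ) (MB : ℝ) (hMB : 0 ≤ MB)
    (hBbd : ∀ t ∈ Set.Icc (0:ℝ) T, ∀ x i, |B t x i| ≤ MB)
    (hBC1 : ∀ t ∈ Set.Icc (0:ℝ) T, ∀ i, ContDiff ℝ 1 (fun y => B t y i))
    (MdivB : ℝ) (hdivBbd : ∀ t ∈ Set.Icc (0:ℝ) T, ∀ x, |hdiv X (B t) x| ≤ MdivB)
    (Q : ℝ → (Fin d → ℝ) → ℝ) (MQ : ℝ)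
    (hQbd : ∀ t ∈ Set.Icc (0:ℝ) T, ∀ x, |Q t x| ≤ MQ)
    (S : (Fin d → ℝ) → ℝ) (hS : ContDiff ℝ 2 S) (hS0 : ∀ x, 0 ≤ S x)
    (hSk : ∀ R, IsCompact {x | S x ≤ R})
    (C : ℝ) (hC : 0 ≤ C) (hgrad : ∀ x, hgradSq X S x ≤ C * S x) (hlap : ∀ x, |hLap X S x| ≤ C)
    (u : ℝ → (Fin d → ℝ) → ℝ)
    (hu : ContinuousOn (fun p : ℝ × (Fin d → ℝ) => u p.1 p.2) (Set.Icc 0 T ×ˢ Set.univ))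
    (hut : ∀ (x : Fin d → ℝ), ∀ t ∈ Set.Ioo (0:ℝ) T, DifferentiableAt ℝ (fun s => u s x) t)
    (hux : ∀ t ∈ Set.Ioo (0:ℝ) T, ContDiff ℝ 2 (u t))
    (hutcont : ContinuousOn (fun p : ℝ × (Fin d → ℝ) => deriv (fun s => u s p.2) p.1)
        (Set.Ioo 0 T ×ˢ Set.univ))
    (hPDE : ∀ t ∈ Set.Ioo (0:ℝ) T, ∀ x,
        deriv (fun s => u s x) t = σ * hLap X (u t) x
          - (∑ i, B t x i * vderiv (X i) (u t) x) - Q t x * u t x)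
    (β : ℝ) (hβ : 0 < β)
    (hint : MeasureTheory.IntegrableOn
        (fun p : ℝ × (Fin d → ℝ) => |u p.1 p.2| * Real.exp (-β * (S p.2 + 1)))
        (Set.Ioc 0 T ×ˢ Set.univ))
    (hu0 : ∀ x, u 0 x = 0) : ∀ t ∈ Icc 0 T, ∀ x, u t x = 0 := by
  obtain ⟨η, η1, η2, hη, hη1, hd1, hd2, hη2, hη0, hηabs, hηm, hηinj, hηz⟩ := exists_eta
  have h0T : (0:ℝ) ∈ Icc 0 T := ⟨le_rfl, hT.le⟩
  have hMQ : 0 ≤ MQ := (abs_nonneg _).trans (hQbd 0 h0T 0)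
  have hMd : 0 ≤ MdivB := (abs_nonneg _).trans (hdivBbd 0 h0T 0)
  obtain ⟨K, hKdef⟩ : ∃ K, K = σ * (β + 2) ^ 2 * C + σ * C * (β + 2) + MdivB
    + MB * (β + 2) * (m + C) + 2 * MQ + 1 := ⟨_, rfl⟩
  have hK0 : 0 < K := by rw [hKdef]; positivity
  have step : ∀ a b : ℝ, 0 ≤ a → a < b → b ≤ T → K * (b - a) ≤ 1 → (∀ x, u a x = 0) →
      ∀ x, u b x = 0 := by
    intro a b ha hab hbT hba hua x
    have hest := energy_estimate X hXsm hXdivfree σ T hσ B MB hMB hBbd hBC1 MdivB hdivBbd Q MQ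
      hMQ hQbd S hS hS0 hSk C hC hgrad hlap u hu hut hux hutcont hPDE hη hη1 hd1 hd2 hη2 hη0
      hηabs hηm hηz β hβ hint K hK0 (by rw [hKdef]; linarith) a b ha hab hbT hba hua
    set K1 := 9 * σ * C + 6 * (β + 2) * σ * C + 3 * MB * (m + C)
    set I := ∫ p in Set.Ioc 0 T ×ˢ Set.univ, |u p.1 p.2| * Real.exp (-β * (S p.2 + 1))
    set h := β + 1 + K * (b - a)
    have hbI : b ∈ Icc 0 T := ⟨by linarith, hbT⟩
    have hubc : Continuous (u b) := by
      rw [← continuousOn_univ]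
      exact hu.comp (f := fun x => (b, x)) (by fun_prop) fun x _ => ⟨hbI, mem_univ _⟩
    have hSc := hS.continuous
    have hGc : ∀ R, Continuous (fun x => η (u b x) * Phi R h (S x)) := fun R =>
      (hη.continuous.comp hubc).mul ((Phi_contDiff R h).continuous.comp hSc)
    have hGs : ∀ R, 1 ≤ R → HasCompactSupport (fun x => η (u b x) * Phi R h (S x)) := fun R hR =>
      HasCompactSupport.intro (hSk R) fun x hx => by
        rw [Phi_zero hR (by simpa using hx), mul_zero]
    set R0 := S x + 1
    have hR0 : 1 ≤ R0 := by have := hS0 x; simp only [R0]; linarith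
    have hle : ∀ R, R0 ≤ R → ∫ x, η (u b x) * Phi R0 h (S x) ≤ K1 * I / R := by
      intro R hR
      refine le_trans (integral_mono
        ((hGc R0).integrable_of_hasCompactSupport (hGs R0 hR0))
        ((hGc R).integrable_of_hasCompactSupport (hGs R (hR0.trans hR))) fun y => ?_)
        ((hest R (hR0.trans hR)).trans (le_of_eq (by ring)))
      refine mul_le_mul_of_nonneg_left ?_ (hη0 _)
      unfold Phi
      refine mul_le_mul_of_nonneg_right ?_ (Real.exp_pos _).le
      refine pow_le_pow_left₀ (le_max_right _ _) (max_le_max ?_ le_rfl) 3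
      have := div_le_div_of_nonneg_left (hS0 y) (by linarith : 0 < R0) hR
      linarith
    have hlim : Filter.Tendsto (fun R : ℝ => K1 * I / R) Filter.atTop (nhds 0) :=
      tendsto_const_nhds.div_atTop Filter.tendsto_id
    have hle0 : ∫ x, η (u b x) * Phi R0 h (S x) ≤ 0 :=
      ge_of_tendsto hlim (by filter_upwards [Filter.eventually_ge_atTop R0] with R hR using hle R hR)
    by_contra hne
    have hpos := (hGc R0).integral_pos_of_hasCompactSupport_nonneg_nonzero (μ := volume) (x := x)
      (hGs R0 hR0) (fun y => mul_nonneg (hη0 _) (Phi_nonneg _ _ _)) (by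
        refine mul_ne_zero (fun h0 => hne (hηinj _ h0)) ?_
        unfold Phi
        refine mul_ne_zero (pow_ne_zero _ (ne_of_gt ?_)) (Real.exp_pos _).ne'
        apply lt_max_of_lt_left
        rw [sub_pos, div_lt_one (by linarith)]
        simp only [R0]; linarith)
    linarith
  have ind : ∀ n : ℕ, ∀ t ∈ Icc 0 T, K * t ≤ n → ∀ x, u t x = 0 := by
    intro n
    induction n with
    | zero =>
      intro t ht hKt x
      have : t = 0 := by
        have h1 := ht.1
        have : K * t ≤ 0 := by simpa using hKt
        nlinarith
      rw [this]; exact hu0 x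
    | succ n ih =>
      intro t ht hKt x
      push_cast at hKt
      by_cases h1 : K * t ≤ n
      · exact ih t ht h1 x
      · push Not at h1
        have e : K * (n / K) = n := by field_simp
        have hlt : (n:ℝ) / K < t := by rw [div_lt_iff₀ hK0]; linarith
        have h0 : (0:ℝ) ≤ n / K := by positivity
        refine step (n / K) t h0 hlt ht.2 (by rw [mul_sub, e]; linarith) ?_ x
        exact ih _ ⟨h0, hlt.le.trans ht.2⟩ e.le
  intro t ht x
  obtain ⟨n, hn⟩ := exists_nat_ge (K * t)
  exact ind n t ht hn x

/-- Uniqueness of bounded-growth classical solutions of the linear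
subelliptic equation `∂_t ρ − σ Δ_G ρ + B·∇_G ρ + Q ρ = 0` with the same initial datum. -/
theorem linear_subelliptic_uniqueness {d m : ℕ} (hd : 0 < d) (hm : 0 < m)
    (X : Fin m → (Fin d → ℝ) → (Fin d → ℝ)) (hXsm : ∀ i, ContDiff ℝ (⊤ : ℕ∞) (X i))
    (hXdivfree : ∀ i x, ediv (X i) x = 0)
    (C₀ : ℝ) (hC₀ : 0 ≤ C₀) (κ : ℕ)
    (hXgrowth : ∀ i (x : Fin d → ℝ), ‖X i x‖ + ‖fderiv ℝ (X i) x‖ ≤ C₀ * (1 + ‖x‖) ^ κ)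
    (σ T : ℝ) (hσ : 0 < σ) (hT : 0 < T)
    (B : ℝ → (Fin d → ℝ) → Fin m → ℝ) (MB : ℝ)
    (hBcont : Continuous (fun p : ℝ × (Fin d → ℝ) => B p.1 p.2))
    (hBbd : ∀ t ∈ Set.Icc (0:ℝ) T, ∀ x i, |B t x i| ≤ MB)
    (hBC1 : ∀ t ∈ Set.Icc (0:ℝ) T, ∀ i, ContDiff ℝ 1 (fun y => B t y i))
    (MdivB : ℝ)
    (hdivBcont : Continuous (fun p : ℝ × (Fin d → ℝ) => hdiv X (B p.1) p.2))
    (hdivBbd : ∀ t ∈ Set.Icc (0:ℝ) T, ∀ x, |hdiv X (B t) x| ≤ MdivB)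
    (Q : ℝ → (Fin d → ℝ) → ℝ) (MQ : ℝ)
    (hQcont : Continuous (fun p : ℝ × (Fin d → ℝ) => Q p.1 p.2))
    (hQbd : ∀ t ∈ Set.Icc (0:ℝ) T, ∀ x, |Q t x| ≤ MQ)
    (N : (Fin d → ℝ) → ℝ) (hNcont : Continuous N) (hNpos : ∀ x, 0 ≤ N x)
    (hNC2 : ContDiff ℝ 2 (fun x => N x ^ 2))
    (C c₀ ε₀ : ℝ) (hC : 0 ≤ C) (hc₀ : 0 < c₀) (hε₀ : 0 < ε₀)
    (hgrad : ∀ x, hgradSq X (fun y => N y ^ 2) x ≤ C * N x ^ 2)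
    (hlap : ∀ x, |hLap X (fun y => N y ^ 2) x| ≤ C)
    (hcoerc : ∀ x : Fin d → ℝ, 1 ≤ ‖x‖ → c₀ * ‖x‖ ^ ε₀ ≤ N x)
    (ρ₀ : (Fin d → ℝ) → ℝ) (ρ : Fin 2 → ℝ → (Fin d → ℝ) → ℝ)
    (hρcont : ∀ j, ContinuousOn (fun p : ℝ × (Fin d → ℝ) => ρ j p.1 p.2)
        (Set.Icc 0 T ×ˢ Set.univ))
    (hρt : ∀ j (x : Fin d → ℝ), ∀ t ∈ Set.Ioo (0:ℝ) T,
        DifferentiableAt ℝ (fun s => ρ j s x) t)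
    (hρx : ∀ j, ∀ t ∈ Set.Ioo (0:ℝ) T, ContDiff ℝ 2 (ρ j t))
    (hρtcont : ∀ j, ContinuousOn
        (fun p : ℝ × (Fin d → ℝ) => deriv (fun s => ρ j s p.2) p.1)
        (Set.Ioo 0 T ×ˢ Set.univ))
    (hρxcont : ∀ j i, ContinuousOn
        (fun p : ℝ × (Fin d → ℝ) => vderiv (X i) (ρ j p.1) p.2)
        (Set.Ioo 0 T ×ˢ Set.univ))
    (hρxxcont : ∀ j i i', ContinuousOn
        (fun p : ℝ × (Fin d → ℝ) => vderiv (X i) (vderiv (X i') (ρ j p.1)) p.2)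
        (Set.Ioo 0 T ×ˢ Set.univ))
    (hPDE : ∀ j, ∀ t ∈ Set.Ioo (0:ℝ) T, ∀ x,
        deriv (fun s => ρ j s x) t - σ * hLap X (ρ j t) x
          + (∑ i, B t x i * vderiv (X i) (ρ j t) x) + Q t x * ρ j t x = 0)
    (hinit : ∀ j x, ρ j 0 x = ρ₀ x)
    (hint : ∀ j, ∃ β : ℝ, 0 < β ∧ MeasureTheory.IntegrableOn
        (fun p : ℝ × (Fin d → ℝ) => |ρ j p.1 p.2| * Real.exp (-β * (N p.2 ^ 2 + 1)))
        (Set.Ioc 0 T ×ˢ Set.univ)) :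
    ∀ t ∈ Set.Icc (0:ℝ) T, ∀ x, ρ 0 t x = ρ 1 t x := by
  have h0T : (0:ℝ) ∈ Icc 0 T := ⟨le_rfl, hT.le⟩
  have hMB : 0 ≤ MB := (abs_nonneg _).trans (hBbd 0 h0T 0 ⟨0, hm⟩)
  obtain ⟨β0, hβ0, hi0⟩ := hint 0
  obtain ⟨β1, hβ1, hi1⟩ := hint 1
  have hms : MeasurableSet (Ioc (0:ℝ) T ×ˢ (univ : Set (Fin d → ℝ))) :=
    measurableSet_Ioc.prod MeasurableSet.univ
  have hlin1 : ∀ t ∈ Ioo (0:ℝ) T, ∀ i x, vderiv (X i) (fun y => ρ 0 t y - ρ 1 t y) x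
      = vderiv (X i) (ρ 0 t) x - vderiv (X i) (ρ 1 t) x := fun t ht i x =>
    vderiv_sub (X i) ((hρx 0 t ht).differentiable (by norm_num) x)
      ((hρx 1 t ht).differentiable (by norm_num) x)
  have hlin2 : ∀ t ∈ Ioo (0:ℝ) T, ∀ x, hLap X (fun y => ρ 0 t y - ρ 1 t y) x
      = hLap X (ρ 0 t) x - hLap X (ρ 1 t) x := by
    intro t ht x
    unfold hLap
    rw [← Finset.sum_sub_distrib]
    refine Finset.sum_congr rfl fun i _ => ?_
    rw [show vderiv (X i) (fun y => ρ 0 t y - ρ 1 t y)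
      = fun x => vderiv (X i) (ρ 0 t) x - vderiv (X i) (ρ 1 t) x from funext (hlin1 t ht i)]
    exact vderiv_sub (X i)
      ((vderiv_contDiff (hXsm i) (hρx 0 t ht)).differentiable (by norm_num) x)
      ((vderiv_contDiff (hXsm i) (hρx 1 t ht)).differentiable (by norm_num) x)
  have hder : ∀ t ∈ Ioo (0:ℝ) T, ∀ x, deriv (fun s => ρ 0 s x - ρ 1 s x) t
      = deriv (fun s => ρ 0 s x) t - deriv (fun s => ρ 1 s x) t := fun t ht x =>
    ((hρt 0 x t ht).hasDerivAt.sub (hρt 1 x t ht).hasDerivAt).deriv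
  have hucont : ContinuousOn (fun p : ℝ × (Fin d → ℝ) => ρ 0 p.1 p.2 - ρ 1 p.1 p.2)
      (Set.Icc 0 T ×ˢ Set.univ) := (hρcont 0).sub (hρcont 1)
  have key := core_uniqueness X hXsm hXdivfree σ T hσ hT B MB hMB hBbd hBC1 MdivB hdivBbd Q MQ hQbd
    (fun x => N x ^ 2) hNC2 (fun x => sq_nonneg _)
    (sublevel_compact N hNcont hNpos c₀ ε₀ hc₀ hε₀ hcoerc) C hC hgrad hlap
    (fun t x => ρ 0 t x - ρ 1 t x) hucont
    (fun x t ht => (hρt 0 x t ht).sub (hρt 1 x t ht))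
    (fun t ht => (hρx 0 t ht).sub (hρx 1 t ht))
    (((hρtcont 0).sub (hρtcont 1)).congr fun p hp => hder p.1 hp.1 p.2)
    (by
      intro t ht x
      rw [hder t ht x, hlin2 t ht x]
      simp_rw [hlin1 t ht]
      have a0 := hPDE 0 t ht x
      have a1 := hPDE 1 t ht x
      have : ∑ i, B t x i * (vderiv (X i) (ρ 0 t) x - vderiv (X i) (ρ 1 t) x)
          = (∑ i, B t x i * vderiv (X i) (ρ 0 t) x) - ∑ i, B t x i * vderiv (X i) (ρ 1 t) x := by
        rw [← Finset.sum_sub_distrib]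
        exact Finset.sum_congr rfl fun i _ => by ring
      rw [this]
      linarith)
    (max β0 β1) (lt_max_of_lt_left hβ0)
    (by
      refine Integrable.mono' (hi0.add hi1) ?_ ?_
      · refine ContinuousOn.aestronglyMeasurable ?_ hms
        refine ((hucont.mono (prod_mono Ioc_subset_Icc_self (subset_univ _))).abs).mul
          (Continuous.continuousOn ?_)
        fun_prop
      · refine Filter.Eventually.of_forall fun p => ?_
        simp only [Pi.add_apply]
        rw [Real.norm_of_nonneg (by positivity)]
        have hp : 0 ≤ N p.2 ^ 2 + 1 := by positivity
        have x0 : Real.exp (-(max β0 β1) * (N p.2 ^ 2 + 1)) ≤ Real.exp (-β0 * (N p.2 ^ 2 + 1)) :=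
          Real.exp_le_exp.2 (mul_le_mul_of_nonneg_right (neg_le_neg (le_max_left _ _)) hp)
        have x1 : Real.exp (-(max β0 β1) * (N p.2 ^ 2 + 1)) ≤ Real.exp (-β1 * (N p.2 ^ 2 + 1)) :=
          Real.exp_le_exp.2 (mul_le_mul_of_nonneg_right (neg_le_neg (le_max_right _ _)) hp)
        calc _ ≤ (|ρ 0 p.1 p.2| + |ρ 1 p.1 p.2|) * Real.exp (-(max β0 β1) * (N p.2 ^ 2 + 1)) :=
              mul_le_mul_of_nonneg_right (abs_sub _ _) (Real.exp_pos _).le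
          _ ≤ _ := by
              rw [add_mul]
              exact add_le_add (mul_le_mul_of_nonneg_left x0 (abs_nonneg _))
                (mul_le_mul_of_nonneg_left x1 (abs_nonneg _)))
    (fun x => by simp [hinit])
  intro t ht x
  exact sub_eq_zero.1 (key t ht x)
end
end

section
/- Let σ > 0, γ ≥ 2 and T > 0. Let F : [0,T]×ℝ^d → ℝ and u₀ : ℝ^d → ℝ be bounded, and let u : [0,T]×ℝ^d → ℝ be continuous with u(0,·) = u₀ and with u(t,·) horizontally differentiable for t ∈ (0,T]. Assume the two duality properties: (H1) for every τ ∈ (0,T] and every μ_τ ∈ C_c^∞(ℝ^d) with μ_τ ≥ 0 and ∫ μ_τ dx = 1, there is a measurable μ : [0,τ]×ℝ^d → [0,∞) with ∫_{ℝ^d} μ(t,x) dx = 1 for every t ∈ [0,τ], with ∫_0^τ ∫_{ℝ^d} |∇_G u|^γ μ dx dt < ∞, and with ∫_{ℝ^d} u(τ,x) μ_τ(x) dx = ∫_{ℝ^d} u₀(x) μ(0,x) dx + ∫_0^τ ∫_{ℝ^d} F μ dx dt − ∫_0^τ ∫_{ℝ^d} |∇_G u|^γ μ dx dt; (H2) for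 every such τ and μ_τ there is a measurable ν : [0,τ]×ℝ^d → [0,∞) with ∫_{ℝ^d} ν(t,x) dx = 1 for every t, ∫_0^τ ∫_{ℝ^d} |∇_G u|^γ ν dx dt < ∞, and ∫_{ℝ^d} u(τ,x) μ_τ(x) dx = ∫_{ℝ^d} u₀(x) ν(0,x) dx + ∫_0^τ ∫_{ℝ^d} (γ−1) |∇_G u|^γ ν dx dt + ∫_0^τ ∫_{ℝ^d} F ν dx dt. Then for all (t,x) ∈ [0,T]×ℝ^d, |u(t,x)| ≤ ((γ+1)/(γ−1)) (‖u₀‖_∞ + T ‖F‖_∞). -/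
open MeasureTheory Set

noncomputable section

theorem aux_avg {d : ℕ} (g μ : (Fin d → ℝ) → ℝ) (M : ℝ) (hg : ∀ x, |g x| ≤ M)
    (h0 : ∀ x, 0 ≤ μ x) (h1 : (∫ x, μ x) = 1) : |∫ x, g x * μ x| ≤ M := by
  have hi : Integrable μ := by
    by_contra h
    rw [integral_undef h] at h1
    norm_num at h1
  have := norm_integral_le_of_norm_le (f := fun x => g x * μ x) (g := fun x => M * μ x)
    (hi.const_mul M) (Filter.Eventually.of_forall fun x => by
      rw [Real.norm_eq_abs, abs_mul, abs_of_nonneg (h0 x)]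
      exact mul_le_mul_of_nonneg_right (hg x) (h0 x))
  rwa [integral_const_mul, h1, mul_one, Real.norm_eq_abs] at this

theorem aux_point {d : ℕ} (v : (Fin d → ℝ) → ℝ) (hv : Continuous v) (C : ℝ)
    (H : ∀ φ : (Fin d → ℝ) → ℝ, ContDiff ℝ (⊤ : ℕ∞) φ → HasCompactSupport φ → (∀ x, 0 ≤ φ x) →
      (∫ x, φ x) = 1 → |∫ x, v x * φ x| ≤ C) (x : Fin d → ℝ) : |v x| ≤ C := by
  refine le_of_forall_pos_le_add fun ε hε => ?_
  obtain ⟨δ, hδ, hδ'⟩ := Metric.continuous_iff.1 hv x ε hε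
  let b : ContDiffBump x := ⟨δ / 2, δ, by positivity, by linarith⟩
  have hint : (∫ y, b.normed volume y) = 1 := b.integral_normed
  have hb : ContDiff ℝ (⊤ : ℕ∞) (b.normed volume) := b.contDiff_normed
  have hcs : HasCompactSupport (b.normed volume) := b.hasCompactSupport_normed
  have h := H (b.normed volume) hb hcs (fun y => b.nonneg_normed y) hint
  have hi : Integrable (b.normed volume) := hb.continuous.integrable_of_hasCompactSupport hcs
  have hi2 : Integrable (fun y => v y * b.normed volume y) :=
    (hv.mul hb.continuous).integrable_of_hasCompactSupport hcs.mul_left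
  have key := norm_integral_le_of_norm_le
    (f := fun y => v x * b.normed volume y - v y * b.normed volume y)
    (g := fun y => ε * b.normed volume y) (hi.const_mul ε) (Filter.Eventually.of_forall fun y => by
      show ‖v x * b.normed volume y - v y * b.normed volume y‖ ≤ ε * b.normed volume y
      rw [← sub_mul, Real.norm_eq_abs, abs_mul, abs_of_nonneg (b.nonneg_normed y)]
      by_cases hy : y ∈ Function.support (b.normed volume)
      · rw [b.support_normed_eq] at hy
        refine mul_le_mul_of_nonneg_right ?_ (b.nonneg_normed y)
        have := hδ' y hy
        rw [Real.dist_eq] at this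
        rw [abs_sub_comm]
        exact this.le
      · rw [Function.notMem_support.1 hy]
        simp)
  rw [integral_sub (hi.const_mul _) hi2, integral_const_mul, integral_const_mul, hint, mul_one,
    mul_one, Real.norm_eq_abs] at key
  rw [abs_le] at *
  constructor <;> linarith [key.1, key.2, h.1, h.2]

/-- `L^∞` bound for a solution of the Hamilton–Jacobi equation via the two
duality properties (H1) and (H2) with solutions of the adjoint Fokker–Planck equation:
`|u(t,x)| ≤ ((γ+1)/(γ−1)) (‖u₀‖_∞ + T ‖F‖_∞)`. -/
theorem hamiltonJacobi_linfty_bound {d m : ℕ} (hd : 0 < d) (hm : 0 < m)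
    (X : Fin m → (Fin d → ℝ) → (Fin d → ℝ)) (hXsm : ∀ i, ContDiff ℝ (⊤ : ℕ∞) (X i))
    (σ γ T : ℝ) (hσ : 0 < σ) (hγ : 2 ≤ γ) (hT : 0 < T)
    (F : ℝ → (Fin d → ℝ) → ℝ) (MF : ℝ) (hMF : ∀ t ∈ Set.Icc (0:ℝ) T, ∀ x, |F t x| ≤ MF)
    (u₀ : (Fin d → ℝ) → ℝ) (Mu : ℝ) (hMu : ∀ x, |u₀ x| ≤ Mu)
    (u : ℝ → (Fin d → ℝ) → ℝ)
    (hucont : ContinuousOn (fun p : ℝ × (Fin d → ℝ) => u p.1 p.2) (Set.Icc 0 T ×ˢ Set.univ))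
    (huinit : ∀ x, u 0 x = u₀ x)
    (hudiff : ∀ t ∈ Set.Ioc (0:ℝ) T, ∀ x, DifferentiableAt ℝ (u t) x)
    -- duality property (H1)
    (H1 : ∀ τ ∈ Set.Ioc (0:ℝ) T, ∀ μτ : (Fin d → ℝ) → ℝ,
        ContDiff ℝ (⊤ : ℕ∞) μτ → HasCompactSupport μτ → (∀ x, 0 ≤ μτ x) →
        (∫ x : Fin d → ℝ, μτ x) = 1 →
        ∃ μ : ℝ → (Fin d → ℝ) → ℝ,
          Measurable (Function.uncurry μ) ∧ (∀ t x, 0 ≤ μ t x) ∧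
          (∀ t ∈ Set.Icc (0:ℝ) τ, (∫ x : Fin d → ℝ, μ t x) = 1) ∧
          MeasureTheory.IntegrableOn
            (fun p : ℝ × (Fin d → ℝ) => Real.sqrt (hgradSq X (u p.1) p.2) ^ γ * μ p.1 p.2)
            (Set.Ioc 0 τ ×ˢ Set.univ) ∧
          (∫ x : Fin d → ℝ, u τ x * μτ x)
            = (∫ x : Fin d → ℝ, u₀ x * μ 0 x)
              + (∫ t in Set.Ioc (0:ℝ) τ, ∫ x : Fin d → ℝ, F t x * μ t x)
              - (∫ t in Set.Ioc (0:ℝ) τ, ∫ x : Fin d → ℝ,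
                  Real.sqrt (hgradSq X (u t) x) ^ γ * μ t x))
    -- duality property (H2)
    (H2 : ∀ τ ∈ Set.Ioc (0:ℝ) T, ∀ μτ : (Fin d → ℝ) → ℝ,
        ContDiff ℝ (⊤ : ℕ∞) μτ → HasCompactSupport μτ → (∀ x, 0 ≤ μτ x) →
        (∫ x : Fin d → ℝ, μτ x) = 1 →
        ∃ ν : ℝ → (Fin d → ℝ) → ℝ,
          Measurable (Function.uncurry ν) ∧ (∀ t x, 0 ≤ ν t x) ∧
          (∀ t ∈ Set.Icc (0:ℝ) τ, (∫ x : Fin d → ℝ, ν t x) = 1) ∧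
          MeasureTheory.IntegrableOn
            (fun p : ℝ × (Fin d → ℝ) => Real.sqrt (hgradSq X (u p.1) p.2) ^ γ * ν p.1 p.2)
            (Set.Ioc 0 τ ×ˢ Set.univ) ∧
          (∫ x : Fin d → ℝ, u τ x * μτ x)
            = (∫ x : Fin d → ℝ, u₀ x * ν 0 x)
              + (∫ t in Set.Ioc (0:ℝ) τ, ∫ x : Fin d → ℝ,
                  (γ - 1) * Real.sqrt (hgradSq X (u t) x) ^ γ * ν t x)
              + (∫ t in Set.Ioc (0:ℝ) τ, ∫ x : Fin d → ℝ, F t x * ν t x)) :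
    ∀ t ∈ Set.Icc (0:ℝ) T, ∀ x, |u t x| ≤ (γ + 1) / (γ - 1) * (Mu + T * MF) := by
  have hMF0 : 0 ≤ MF := (abs_nonneg _).trans (hMF 0 ⟨le_rfl, hT.le⟩ 0)
  have hMu0 : 0 ≤ Mu := (abs_nonneg _).trans (hMu 0)
  have hC0 : 0 ≤ Mu + T * MF := by positivity
  have hfac : Mu + T * MF ≤ (γ + 1) / (γ - 1) * (Mu + T * MF) := by
    refine le_mul_of_one_le_left hC0 ?_
    rw [one_le_div (by linarith)]
    linarith
  have hFb : ∀ τ ∈ Set.Ioc (0:ℝ) T, ∀ μ : ℝ → (Fin d → ℝ) → ℝ, (∀ t x, 0 ≤ μ t x) →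
      (∀ t ∈ Set.Icc (0:ℝ) τ, (∫ x : Fin d → ℝ, μ t x) = 1) →
      |∫ t in Set.Ioc (0:ℝ) τ, ∫ x : Fin d → ℝ, F t x * μ t x| ≤ T * MF := by
    intro τ hτ μ h0 h1
    have := norm_setIntegral_le_of_norm_le_const (μ := volume) (s := Set.Ioc (0:ℝ) τ) (C := MF)
      (f := fun t => ∫ x : Fin d → ℝ, F t x * μ t x) (by simp) (fun t ht =>
        aux_avg (F t) (μ t) MF (hMF t ⟨ht.1.le, ht.2.trans hτ.2⟩) (h0 t) (h1 t ⟨ht.1.le, ht.2⟩))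
    rw [Real.norm_eq_abs] at this
    refine this.trans ?_
    rw [Real.volume_real_Ioc_of_le hτ.1.le, sub_zero, mul_comm]
    exact mul_le_mul_of_nonneg_right hτ.2 hMF0
  intro t ht x
  refine le_trans ?_ hfac
  rcases ht.1.eq_or_lt with rfl | ht0
  · rw [huinit]
    have : 0 ≤ T * MF := by positivity
    linarith [hMu x]
  have htI : t ∈ Set.Ioc (0:ℝ) T := ⟨ht0, ht.2⟩
  have hvc : Continuous (u t) := continuous_iff_continuousAt.2 fun y => (hudiff t htI y).continuousAt
  refine aux_point (u t) hvc _ (fun φ h1 h2 h3 h4 => ?_) x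
  rw [abs_le]
  constructor
  · obtain ⟨ν, -, hν0, hν1, -, hν⟩ := H2 t htI φ h1 h2 h3 h4
    rw [hν]
    have e1 := abs_le.1 (aux_avg u₀ (ν 0) Mu hMu (hν0 0) (hν1 0 ⟨le_rfl, ht0.le⟩))
    have e2 := abs_le.1 (hFb t htI ν hν0 hν1)
    have e3 : 0 ≤ ∫ s in Set.Ioc (0:ℝ) t, ∫ x : Fin d → ℝ,
        (γ - 1) * Real.sqrt (hgradSq X (u s) x) ^ γ * ν s x :=
      integral_nonneg fun s => integral_nonneg fun y =>
        mul_nonneg (mul_nonneg (by linarith) (Real.rpow_nonneg (Real.sqrt_nonneg _) _)) (hν0 s y)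
    linarith [e1.1, e2.1]
  · obtain ⟨ν, -, hν0, hν1, -, hν⟩ := H1 t htI φ h1 h2 h3 h4
    rw [hν]
    have e1 := abs_le.1 (aux_avg u₀ (ν 0) Mu hMu (hν0 0) (hν1 0 ⟨le_rfl, ht0.le⟩))
    have e2 := abs_le.1 (hFb t htI ν hν0 hν1)
    have e3 : 0 ≤ ∫ s in Set.Ioc (0:ℝ) t, ∫ x : Fin d → ℝ,
        Real.sqrt (hgradSq X (u s) x) ^ γ * ν s x :=
      integral_nonneg fun s => integral_nonneg fun y =>
        mul_nonneg (Real.rpow_nonneg (Real.sqrt_nonneg _) _) (hν0 s y)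
    linarith [e1.2, e2.2]
end
end

section
/- Let σ > 0, γ ≥ 2 and T > 0, and let Y be a smooth vector field on ℝ^d with [X_i, Y] = 0 for every i = 1, …, m. Let F : (0,T)×ℝ^d → ℝ be differentiable in x, and let u : (0,T)×ℝ^d → ℝ be C² jointly in (t,x) and three times continuously differentiable in x, with all spatial derivatives up to order three continuous in (t,x), satisfying ∂_t u − σ Δ_G u + |∇_G u|^γ = F pointwise on (0,T)×ℝ^d. Then the function v := Yu, i.e. v(t,x) := D_x u(t,x)[Y(x)], satisfies the linearized equation ∂_t v − σ Δ_G v + γ |∇_G u|^{γ−2} ∇_G u · ∇_G v = YF pointwise on (0,T)×ℝ^d, where YF(t,x) := D_x F(t,x)[Y(x)]. -/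
open MeasureTheory Set

noncomputable section

/-- Derivative of `X f`. -/
lemma fderiv_vderiv_apply {d : ℕ} {X : (Fin d → ℝ) → (Fin d → ℝ)} {f : (Fin d → ℝ) → ℝ}
    (hX : ContDiff ℝ (⊤ : ℕ∞) X) (hf : ContDiff ℝ 2 f) (x w : Fin d → ℝ) :
    fderiv ℝ (vderiv X f) x w
      = fderiv ℝ (fderiv ℝ f) x w (X x) + fderiv ℝ f x (fderiv ℝ X x w) := by
  have h1 : DifferentiableAt ℝ (fderiv ℝ f) x :=
    ((hf.fderiv_right (m := 1) (by norm_num)).differentiable (by norm_num)) x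
  have h2 : DifferentiableAt ℝ X x := (hX.differentiable (by simp)) x
  have h := h1.hasFDerivAt.clm_apply h2.hasFDerivAt
  have h' : HasFDerivAt (vderiv X f) _ x := h
  rw [h'.fderiv]
  simp [add_comm]

lemma contDiff_vderiv {d : ℕ} {X : (Fin d → ℝ) → (Fin d → ℝ)} {f : (Fin d → ℝ) → ℝ}
    (hX : ContDiff ℝ (⊤ : ℕ∞) X) {n : ℕ} (hf : ContDiff ℝ (n + 1 : ℕ) f) :
    ContDiff ℝ n (vderiv X f) := by
  have h1 : ContDiff ℝ n (fderiv ℝ f) := hf.fderiv_right (by norm_cast)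
  have h2 : ContDiff ℝ n X := hX.of_le (by exact_mod_cast le_top)
  exact h1.clm_apply h2

lemma vderiv_comm {d : ℕ} {X Y : (Fin d → ℝ) → (Fin d → ℝ)} {f : (Fin d → ℝ) → ℝ}
    (hX : ContDiff ℝ (⊤ : ℕ∞) X) (hY : ContDiff ℝ (⊤ : ℕ∞) Y)
    (hcomm : ∀ x, fderiv ℝ Y x (X x) - fderiv ℝ X x (Y x) = 0)
    (hf : ContDiff ℝ 2 f) : vderiv Y (vderiv X f) = vderiv X (vderiv Y f) := by
  funext x
  have hs : IsSymmSndFDerivAt ℝ f x := hf.contDiffAt.isSymmSndFDerivAt (by simp)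
  change fderiv ℝ (vderiv X f) x (Y x) = fderiv ℝ (vderiv Y f) x (X x)
  rw [fderiv_vderiv_apply hX hf, fderiv_vderiv_apply hY hf, hs.eq (Y x) (X x),
    sub_eq_zero.mp (hcomm x)]

/-- Exchange of the time derivative and the spatial derivative. -/
lemma time_space_exchange {d : ℕ} {T : ℝ} {u : ℝ → (Fin d → ℝ) → ℝ}
    (huC2 : ContDiffOn ℝ 2 (fun p : ℝ × (Fin d → ℝ) => u p.1 p.2) (Set.Ioo 0 T ×ˢ Set.univ))
    {t : ℝ} (ht : t ∈ Set.Ioo (0:ℝ) T) (x w : Fin d → ℝ) :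
    DifferentiableAt ℝ (fun y => deriv (fun r => u r y) t) x ∧
    deriv (fun r => fderiv ℝ (u r) x w) t
      = fderiv ℝ (fun y => deriv (fun r => u r y) t) x w := by
  set U : ℝ × (Fin d → ℝ) → ℝ := fun p => u p.1 p.2 with hU
  have hopen : IsOpen (Set.Ioo (0:ℝ) T ×ˢ (Set.univ : Set (Fin d → ℝ))) :=
    isOpen_Ioo.prod isOpen_univ
  have hat : ∀ r ∈ Set.Ioo (0:ℝ) T, ∀ y, ContDiffAt ℝ 2 U (r, y) := fun r hr y =>
    huC2.contDiffAt (hopen.mem_nhds ⟨hr, Set.mem_univ _⟩)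
  have hd1 : ∀ r ∈ Set.Ioo (0:ℝ) T, ∀ y, HasFDerivAt U (fderiv ℝ U (r, y)) (r, y) :=
    fun r hr y => ((hat r hr y).differentiableAt (by norm_num)).hasFDerivAt
  have hx : ∀ r ∈ Set.Ioo (0:ℝ) T, ∀ y, fderiv ℝ (u r) y w = fderiv ℝ U (r, y) (0, w) := by
    intro r hr y
    have h := (hd1 r hr y).comp y (hasFDerivAt_prodMk_right r y)
    have h' : HasFDerivAt (u r) _ y := h
    rw [h'.fderiv]
    simp
  have htt : ∀ y, deriv (fun r => u r y) t = fderiv ℝ U (t, y) (1, 0) := by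
    intro y
    have h := ((hd1 t ht y).comp t (hasFDerivAt_prodMk_left t y)).hasDerivAt
    have h' : HasDerivAt (fun r => u r y) _ t := h
    rw [h'.deriv]
    simp
  have hD : HasFDerivAt (fderiv ℝ U) (fderiv ℝ (fderiv ℝ U) (t, x)) (t, x) :=
    (((hat t ht x).fderiv_right (m := 1) (by norm_num)).differentiableAt
      (by norm_num)).hasFDerivAt
  have hs : IsSymmSndFDerivAt ℝ U (t, x) := (hat t ht x).isSymmSndFDerivAt (by simp)
  have e1 : (fun y => deriv (fun r => u r y) t) = fun y => fderiv ℝ U (t, y) (1, 0) :=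
    funext htt
  have A : HasFDerivAt (fun y => fderiv ℝ U (t, y) ((1 : ℝ), (0 : Fin d → ℝ))) _ x :=
    (hD.comp x (hasFDerivAt_prodMk_right t x)).clm_apply (hasFDerivAt_const ((1 : ℝ), (0 : Fin d → ℝ)) x)
  have B : HasDerivAt (fun r => fderiv ℝ U (r, x) ((0 : ℝ), w)) _ t :=
    ((hD.comp t (hasFDerivAt_prodMk_left t x)).clm_apply
      (hasFDerivAt_const ((0 : ℝ), w) t)).hasDerivAt
  have e2 : (fun r => fderiv ℝ (u r) x w) =ᶠ[nhds t] fun r => fderiv ℝ U (r, x) (0, w) := by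
    filter_upwards [isOpen_Ioo.mem_nhds ht] with r hr using hx r hr x
  rw [e1, e2.deriv_eq, B.deriv, A.fderiv]
  refine ⟨A.differentiableAt, ?_⟩
  simpa using hs.eq (1, 0) (0, w)

/-- If `Y` commutes with all the horizontal fields `X_i` and `u` solves the
Hamilton–Jacobi equation `∂_t u − σ Δ_G u + |∇_G u|^γ = F`, then `v = Yu` solves the
linearized equation `∂_t v − σ Δ_G v + γ |∇_G u|^{γ−2} ∇_G u · ∇_G v = YF`. -/
theorem bernstein_commuting_field_equation {d m : ℕ} (hd : 0 < d) (hm : 0 < m)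
    (X : Fin m → (Fin d → ℝ) → (Fin d → ℝ)) (hXsm : ∀ i, ContDiff ℝ (⊤ : ℕ∞) (X i))
    (Y : (Fin d → ℝ) → (Fin d → ℝ)) (hYsm : ContDiff ℝ (⊤ : ℕ∞) Y)
    (hcomm : ∀ i (x : Fin d → ℝ), fderiv ℝ Y x (X i x) - fderiv ℝ (X i) x (Y x) = 0)
    (σ γ T : ℝ) (hσ : 0 < σ) (hγ : 2 ≤ γ) (hT : 0 < T)
    (F : ℝ → (Fin d → ℝ) → ℝ)
    (hF : ∀ t ∈ Set.Ioo (0:ℝ) T, ∀ x, DifferentiableAt ℝ (F t) x)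
    (u : ℝ → (Fin d → ℝ) → ℝ)
    (huC2 : ContDiffOn ℝ 2 (fun p : ℝ × (Fin d → ℝ) => u p.1 p.2) (Set.Ioo 0 T ×ˢ Set.univ))
    (huC3 : ∀ t ∈ Set.Ioo (0:ℝ) T, ContDiff ℝ 3 (u t))
    (huDcont : ∀ k : ℕ, k ≤ 3 → ContinuousOn
        (fun p : ℝ × (Fin d → ℝ) => iteratedFDeriv ℝ k (u p.1) p.2)
        (Set.Ioo 0 T ×ˢ Set.univ))
    (hPDE : ∀ t ∈ Set.Ioo (0:ℝ) T, ∀ x,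
        deriv (fun r => u r x) t - σ * hLap X (u t) x
          + Real.sqrt (hgradSq X (u t) x) ^ γ = F t x) :
    ∀ t ∈ Set.Ioo (0:ℝ) T, ∀ x,
      deriv (fun r => vderiv Y (u r) x) t
        - σ * hLap X (fun y => vderiv Y (u t) y) x
        + γ * Real.sqrt (hgradSq X (u t) x) ^ (γ - 2)
            * (∑ i, vderiv (X i) (u t) x * vderiv (X i) (fun y => vderiv Y (u t) y) x)
        = vderiv Y (F t) x := by
  intro t ht x
  have h3 := huC3 t ht
  have h2 : ContDiff ℝ 2 (u t) := h3.of_le (by norm_num)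
  obtain ⟨hdt, hte⟩ := time_space_exchange huC2 ht x (Y x)
  have hXu : ∀ i, ContDiff ℝ 2 (vderiv (X i) (u t)) := fun i =>
    contDiff_vderiv (n := 2) (hXsm i) h3
  have hXXu : ∀ i, ContDiff ℝ 1 (vderiv (X i) (vderiv (X i) (u t))) := fun i =>
    contDiff_vderiv (n := 1) (hXsm i) (hXu i)
  have c1 : ∀ i, vderiv Y (vderiv (X i) (u t)) = vderiv (X i) (vderiv Y (u t)) := fun i =>
    vderiv_comm (hXsm i) hYsm (hcomm i) h2
  have c2 : ∀ i, vderiv Y (vderiv (X i) (vderiv (X i) (u t)))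
      = vderiv (X i) (vderiv (X i) (vderiv Y (u t))) := fun i => by
    rw [vderiv_comm (hXsm i) hYsm (hcomm i) (hXu i), c1]
  -- derivative of the horizontal Laplacian
  have hL : HasFDerivAt (hLap X (u t))
      (∑ i, fderiv ℝ (vderiv (X i) (vderiv (X i) (u t))) x) x := by
    have h := HasFDerivAt.fun_sum (u := Finset.univ) (fun i _ =>
      ((hXXu i).differentiable (by norm_num) x).hasFDerivAt)
    exact h
  -- derivative of the squared gradient
  have hG : HasFDerivAt (hgradSq X (u t))
      (∑ i, (2 * vderiv (X i) (u t) x) • fderiv ℝ (vderiv (X i) (u t)) x) x := by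
    have h := HasFDerivAt.fun_sum (u := Finset.univ) (fun i _ =>
      (((hXu i).differentiable (by norm_num) x).hasFDerivAt.pow 2))
    simp only [Nat.cast_ofNat, Nat.add_one_sub_one, pow_one, nsmul_eq_mul, smul_eq_mul] at h
    exact h
  have hg0 : ∀ y, 0 ≤ hgradSq X (u t) y := fun y => Finset.sum_nonneg fun i _ => sq_nonneg _
  have hpow : ∀ (a : ℝ) y, Real.sqrt (hgradSq X (u t) y) ^ a = hgradSq X (u t) y ^ (a / 2) := by
    intro a y
    rw [Real.sqrt_eq_rpow, ← Real.rpow_mul (hg0 y)]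
    congr 1
    ring
  have hP := hG.rpow_const (p := γ / 2) (Or.inr (by linarith))
  have hFe : F t = fun y => deriv (fun r => u r y) t - σ * hLap X (u t) y
      + hgradSq X (u t) y ^ (γ / 2) := by
    funext y
    rw [← hPDE t ht y, hpow]
  have hFd := (hdt.hasFDerivAt.sub (hL.const_mul σ)).add hP
  have hFd' := hFd.congr_of_eventuallyEq (f₁ := F t)
    (Filter.Eventually.of_forall fun y => congrFun hFe y)
  have hv : vderiv Y (F t) x = fderiv ℝ (F t) x (Y x) := rfl
  have hd1 : deriv (fun r => vderiv Y (u r) x) t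
      = fderiv ℝ (fun y => deriv (fun r => u r y) t) x (Y x) := hte
  have a1 : ∀ i, fderiv ℝ (vderiv (X i) (vderiv (X i) (u t))) x (Y x)
      = vderiv (X i) (vderiv (X i) (vderiv Y (u t))) x := fun i => congrFun (c2 i) x
  have a2 : ∀ i, fderiv ℝ (vderiv (X i) (u t)) x (Y x)
      = vderiv (X i) (vderiv Y (u t)) x := fun i => congrFun (c1 i) x
  rw [hv, hFd'.fderiv, hd1, hpow]
  have e : (γ - 2) / 2 = γ / 2 - 1 := by ring
  rw [e]
  simp only [ContinuousLinearMap.add_apply, ContinuousLinearMap.sub_apply,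
    ContinuousLinearMap.smul_apply, ContinuousLinearMap.sum_apply, smul_eq_mul, a1, a2, hLap]
  congr 1
  simp only [mul_assoc, ← Finset.mul_sum]
  ring
end
end
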